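/- Let N ≥ 3, let Ω ⊂ ℝ^N be an open set, let θ ≥ p > 1 and λ, γ > 0, and let s₀ be the unique root of L in (2, ∞). Then for every s with 2 ≤ s < (N/(N−2)) s₀ there exist a natural number ℓ and a constant C > 0 (depending only on N, p, θ, s, λ, γ) such that for every pair (u, v) of functions in C²(Ω), positive in Ω, satisfying −Δu = λ(v+1)^p and −Δv = γ(u+1)^θ in Ω and stable, and every y ∈ Ω and R > 0 with the closed ball B_R(y) contained in Ω, one has (R^{−N} ∫_{B_{2^{−ℓ}R}(y)} (v+1)^s dx)^{2/s} ≤ C R^{−N} ∫_{B_R(y)} (v+1)² dx. -/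

import Mathlib

open MeasureTheory Metric Real Set

noncomputable section

/-- The Euclidean Laplacian `Δw(x) = ∑ i, ∂²w/∂xᵢ²(x)` on `ℝ^N`. -/
def lap {N : ℕ} (w : EuclideanSpace ℝ (Fin N) → ℝ) (x : EuclideanSpace ℝ (Fin N)) : ℝ :=
  ∑ i : Fin N,
    fderiv ℝ (fun y => fderiv ℝ w y (EuclideanSpace.single i 1)) x (EuclideanSpace.single i 1)

/-- `φ` is a smooth compactly supported test function with support inside `Ω`. -/
def IsTestFun {N : ℕ} (Ω : Set (EuclideanSpace ℝ (Fin N)))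
    (φ : EuclideanSpace ℝ (Fin N) → ℝ) : Prop :=
  ContDiff ℝ (⊤ : ℕ∞) φ ∧ HasCompactSupport φ ∧ tsupport φ ⊆ Ω

/-- Stability of a classical solution of `-Δu = λ(v+1)^p, -Δv = γ(u+1)^θ` in `Ω`:
`√(λγpθ) ∫_Ω (v+1)^((p-1)/2) (u+1)^((θ-1)/2) φ² ≤ ∫_Ω |∇φ|²` for all test functions. -/
def IsStable {N : ℕ} (Ω : Set (EuclideanSpace ℝ (Fin N))) (lam gam p θ : ℝ)
    (u v : EuclideanSpace ℝ (Fin N) → ℝ) : Prop :=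
  ∀ φ : EuclideanSpace ℝ (Fin N) → ℝ, IsTestFun Ω φ →
    Real.sqrt (lam * gam * p * θ) *
        ∫ x in Ω, (v x + 1) ^ ((p - 1) / 2) * (u x + 1) ^ ((θ - 1) / 2) * φ x ^ 2
      ≤ ∫ x in Ω, ‖gradient φ x‖ ^ 2

/-- `(u,v)` is a positive classical solution of `-Δu = λ(v+1)^p, -Δv = γ(u+1)^θ` in `Ω`. -/
def IsSolution {N : ℕ} (Ω : Set (EuclideanSpace ℝ (Fin N))) (lam gam p θ : ℝ)
    (u v : EuclideanSpace ℝ (Fin N) → ℝ) : Prop :=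
  ContDiffOn ℝ 2 u Ω ∧ ContDiffOn ℝ 2 v Ω ∧
  (∀ x ∈ Ω, 0 < u x) ∧ (∀ x ∈ Ω, 0 < v x) ∧
  (∀ x ∈ Ω, -lap u x = lam * (v x + 1) ^ p) ∧
  (∀ x ∈ Ω, -lap v x = gam * (u x + 1) ^ θ)

/-- The quartic polynomial `L`. -/
def Lpoly (p θ s : ℝ) : ℝ :=
  s ^ 4 - (16 * p * θ * (p + 1) / (θ + 1)) * s ^ 2
    + (16 * p * θ * (p + 1) * (p + θ + 2) / (θ + 1) ^ 2) * s
    - 16 * p * θ * (p + 1) ^ 2 / (θ + 1) ^ 2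

/-!
Rescaling the ball to the unit ball and `(u + 1, v + 1)` to a pair `(U, V)`, the system becomes
`-ΔU = σ V^p`, `-ΔV = U^θ` with `σ = (p + 1) / (θ + 1)`. For this `σ` one has
`-Δ(V ^ σ) ≥ σ V ^ (σ - 1) U ^ θ`, so `U - V ^ σ` is subharmonic where it is positive, and the mean
value inequality gives the comparison `U ≤ V ^ σ + k` with `k ^ θ` bounded by `∫ V`.

Test the stability inequality with `V ^ (t / 2) η` and `(U - k)₊ ^ (t / (2 σ)) η`, where `η` is a
cutoff function. By the Caccioppoli identity the energy of `w ^ (t / 2) η` is, up to lower order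
terms, `t² / (4 (t - 1))` times `∫ (-Δw) w ^ (t - 1) η²`. Interpolating the two right-hand sides
`V ^ p U ^ (t / σ - 1)` and `U ^ θ V ^ (t - 1)` by the weighted AM-GM inequality, the energies can
be absorbed as soon as the product of the two constants is less than `p θ`, which is exactly
`L(t) < 0`. The Sobolev inequality then bounds the moment of `V` of order `t N / (N - 2)` on a
smaller ball by the moment of order `t`. Since `L < 0` on `[2, s₀)`, iterating from `t = 2` reaches
every exponent below `s₀ N / (N - 2)`.
-/

/-! ### Cutoff functions -/

/-- `ξ ∈ C^n_c(Ω)`. For `n = ∞` this is the notion `IsTestFun` of the statement; finite `n` is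
needed because the functions `u, v` inserted into test functions are only `C²`. -/
structure IsCutoff {E : Type*} [NormedAddCommGroup E] [NormedSpace ℝ E] (n : WithTop ℕ∞)
    (Ω : Set E) (ξ : E → ℝ) : Prop where
  contDiff : ContDiff ℝ n ξ
  hasCompactSupport : HasCompactSupport ξ
  tsupport_subset : tsupport ξ ⊆ Ω

namespace IsCutoff

section

variable {E : Type*} [NormedAddCommGroup E] [NormedSpace ℝ E] {m n : WithTop ℕ∞} {Ω Ω' : Set E}
  {f ξ : E → ℝ}

lemma of_le (hξ : IsCutoff n Ω ξ) (hmn : m ≤ n) : IsCutoff m Ω ξ :=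
  ⟨hξ.contDiff.of_le hmn, hξ.hasCompactSupport, hξ.tsupport_subset⟩

lemma mono (hξ : IsCutoff n Ω ξ) (h : Ω ⊆ Ω') : IsCutoff n Ω' ξ :=
  ⟨hξ.contDiff, hξ.hasCompactSupport, hξ.tsupport_subset.trans h⟩

lemma eq_zero (hξ : IsCutoff n Ω ξ) {x : E} (hx : x ∉ Ω) : ξ x = 0 :=
  image_eq_zero_of_notMem_tsupport fun h => hx (hξ.tsupport_subset h)

lemma mul_left (hξ : IsCutoff n Ω ξ) (hΩ : IsOpen Ω) (hf : ContDiffOn ℝ n f Ω) :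
    IsCutoff n Ω (fun x => f x * ξ x) := by
  have hsub : tsupport (fun x => f x * ξ x) ⊆ tsupport ξ := tsupport_mul_subset_right
  refine ⟨contMDiff_iff_contDiff.1 (contMDiff_of_tsupport fun x hx => ?_),
    hξ.hasCompactSupport.mul_left, hsub.trans hξ.tsupport_subset⟩
  exact ContDiffAt.contMDiffAt ((hf.contDiffAt (hΩ.mem_nhds (hξ.tsupport_subset (hsub hx)))).mul
    hξ.contDiff.contDiffAt)

lemma mul_left_of_continuousOn (hξ : IsCutoff 0 Ω ξ) (hΩ : IsOpen Ω) (hf : ContinuousOn f Ω) :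
    IsCutoff 0 Ω (fun x => f x * ξ x) :=
  hξ.mul_left hΩ (contDiffOn_zero.2 hf)

lemma const_mul (hξ : IsCutoff n Ω ξ) (c : ℝ) : IsCutoff n Ω (fun x => c * ξ x) := by
  have hsub : tsupport (fun x => c * ξ x) ⊆ tsupport ξ := tsupport_mul_subset_right
  exact ⟨contDiff_const.mul hξ.contDiff, hξ.hasCompactSupport.mul_left,
    hsub.trans hξ.tsupport_subset⟩

lemma sub {ζ : E → ℝ} (hξ : IsCutoff n Ω ξ) (hζ : IsCutoff n Ω ζ) :
    IsCutoff n Ω (fun x => ξ x - ζ x) :=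
  ⟨hξ.contDiff.sub hζ.contDiff, hξ.hasCompactSupport.sub hζ.hasCompactSupport,
    (tsupport_sub ξ ζ).trans (union_subset hξ.tsupport_subset hζ.tsupport_subset)⟩

lemma sq (hξ : IsCutoff n Ω ξ) : IsCutoff n Ω (fun x => ξ x ^ 2) := by
  have hsub : tsupport (fun x => ξ x ^ 2) ⊆ tsupport ξ :=
    closure_mono fun x hx h => hx (by simp [h])
  exact ⟨hξ.contDiff.pow 2, hξ.hasCompactSupport.of_isClosed_subset (isClosed_tsupport _) hsub,
    hsub.trans hξ.tsupport_subset⟩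

lemma fderiv_apply (hξ : IsCutoff n Ω ξ) (hmn : m + 1 ≤ n) (e : E) :
    IsCutoff m Ω (fun x => fderiv ℝ ξ x e) :=
  ⟨(hξ.contDiff.fderiv_right hmn).clm_apply contDiff_const,
    hξ.hasCompactSupport.fderiv_apply (𝕜 := ℝ) e,
    (tsupport_fderiv_apply_subset ℝ e).trans hξ.tsupport_subset⟩

lemma comp_add_smul (hξ : IsCutoff n Ω ξ) (y : E) {r : ℝ} (hr : r ≠ 0) :
    IsCutoff n ((fun z => y + r • z) ⁻¹' Ω) (fun z => ξ (y + r • z)) := by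
  refine ⟨hξ.contDiff.comp (by fun_prop), ?_, ?_⟩
  · exact hξ.hasCompactSupport.comp_homeomorph
      ((Homeomorph.smulOfNeZero r hr).trans (Homeomorph.addLeft y))
  · refine (tsupport_comp_subset_preimage ξ (f := fun z : E => y + r • z) (by fun_prop)).trans ?_
    exact preimage_mono hξ.tsupport_subset

variable [MeasurableSpace E] {μ : Measure E}

lemma setIntegral_eq (hξ : IsCutoff n Ω ξ) : ∫ x in Ω, ξ x ∂μ = ∫ x, ξ x ∂μ :=
  setIntegral_eq_integral_of_forall_compl_eq_zero fun _ hx => hξ.eq_zero hx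

variable [OpensMeasurableSpace E]

lemma integrable [IsFiniteMeasureOnCompacts μ] (hξ : IsCutoff n Ω ξ) : Integrable ξ μ :=
  hξ.contDiff.continuous.integrable_of_hasCompactSupport hξ.hasCompactSupport

lemma integrable_mul [IsFiniteMeasureOnCompacts μ] (hξ : IsCutoff n Ω ξ) (hΩ : IsOpen Ω)
    (hf : ContinuousOn f Ω) : Integrable (fun x => f x * ξ x) μ :=
  ((hξ.of_le zero_le).mul_left_of_continuousOn hΩ hf).integrable

end

section

variable {E : Type*} [NormedAddCommGroup E] [InnerProductSpace ℝ E] [CompleteSpace E]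
  {Ω : Set E} {ξ : E → ℝ}

lemma gradient_eq_zero {n : WithTop ℕ∞} (hξ : IsCutoff n Ω ξ) {x : E} (hx : x ∉ Ω) :
    gradient ξ x = 0 := by
  rw [gradient, fderiv_of_notMem_tsupport ℝ fun h => hx (hξ.tsupport_subset h), map_zero]

lemma norm_gradient_sq (hξ : IsCutoff 1 Ω ξ) : IsCutoff 0 Ω (fun x => ‖gradient ξ x‖ ^ 2) := by
  have hnorm : (fun x => ‖gradient ξ x‖ ^ 2) = fun x => ‖fderiv ℝ ξ x‖ ^ 2 := by
    simp only [gradient, LinearIsometryEquiv.norm_map]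
  have hsub : tsupport (fun x => ‖fderiv ℝ ξ x‖ ^ 2) ⊆ tsupport ξ :=
    (closure_mono (Function.support_subset_iff'.2 fun x hx => by
      simpa using Function.notMem_support.1 hx)).trans (tsupport_fderiv_subset ℝ)
  rw [hnorm]
  exact ⟨contDiff_zero.2 ((hξ.contDiff.continuous_fderiv one_ne_zero).norm.pow 2),
    hξ.hasCompactSupport.of_isClosed_subset (isClosed_tsupport _) hsub,
    hsub.trans hξ.tsupport_subset⟩

end

end IsCutoff

lemma integral_mul_fderiv_eq_neg_fderiv_mul_of_isCutoff {E : Type*} [NormedAddCommGroup E]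
    [NormedSpace ℝ E] [FiniteDimensional ℝ E] [MeasurableSpace E] [BorelSpace E] {μ : Measure E}
    [μ.IsAddHaarMeasure] {Ω : Set E} (hΩ : IsOpen Ω) {f ξ : E → ℝ} (hf : ContDiffOn ℝ 1 f Ω)
    (hξ : IsCutoff 1 Ω ξ) (e : E) :
    ∫ x, f x * fderiv ℝ ξ x e ∂μ = -∫ x, fderiv ℝ f x e * ξ x ∂μ := by
  have hdf : ContinuousOn (fun x => fderiv ℝ f x e) Ω :=
    (hf.continuousOn_fderiv_of_isOpen hΩ le_rfl).clm_apply continuousOn_const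
  refine integral_mul_fderiv_eq_neg_fderiv_mul_of_integrable (hξ.integrable_mul hΩ hdf)
    ((hξ.fderiv_apply (m := 0) (by simp) e).integrable_mul hΩ hf.continuousOn)
    (hξ.integrable_mul hΩ hf.continuousOn) (fun x hx => ?_)
    (fun x _ => hξ.contDiff.differentiable one_ne_zero x)
  exact (hf.contDiffAt (hΩ.mem_nhds (hξ.tsupport_subset hx))).differentiableAt one_ne_zero

/-! ### Gradients and the Laplacian -/

section

variable {E : Type*} [NormedAddCommGroup E] [InnerProductSpace ℝ E] [CompleteSpace E]

lemma gradient_comp {f : E → ℝ} {g : ℝ → ℝ} {g' : ℝ} {x : E} (hf : DifferentiableAt ℝ f x)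
    (hg : HasDerivAt g g' (f x)) : gradient (fun y => g (f y)) x = g' • gradient f x := by
  have hfderiv := (hg.comp_hasFDerivAt x hf.hasFDerivAt).fderiv
  simp only [Function.comp_def] at hfderiv
  rw [gradient, hfderiv, map_smul, gradient]

lemma gradient_mul {f g : E → ℝ} {x : E} (hf : DifferentiableAt ℝ f x)
    (hg : DifferentiableAt ℝ g x) :
    gradient (fun y => f y * g y) x = f x • gradient g x + g x • gradient f x := by
  rw [gradient, fderiv_fun_mul hf hg, map_add, map_smul, map_smul, gradient, gradient]

lemma gradient_rpow {f : E → ℝ} {r : ℝ} (hr : 1 ≤ r) {x : E} (hf : DifferentiableAt ℝ f x) :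
    gradient (fun y => f y ^ r) x = (r * f x ^ (r - 1)) • gradient f x :=
  gradient_comp hf (Real.hasDerivAt_rpow_const (Or.inr hr))

lemma gradient_comp_add_smul (f : E → ℝ) (y : E) (r : ℝ) (x : E) :
    gradient (fun z => f (y + r • z)) x = r • gradient f (y + r • x) := by
  have hfderiv : fderiv ℝ (fun z => f (y + r • z)) x = r • fderiv ℝ f (y + r • x) := by
    rw [fderiv_comp_smul (f := fun z => f (y + z)) r, fderiv_comp_add_left]
  rw [gradient, hfderiv, map_smul, gradient]

end

section

variable {N : ℕ}

local notation "𝔼" => EuclideanSpace ℝ (Fin N)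

lemma inner_gradient_eq_sum (f g : 𝔼 → ℝ) (x : 𝔼) :
    inner ℝ (gradient f x) (gradient g x) = ∑ i, fderiv ℝ f x (EuclideanSpace.single i 1) *
      fderiv ℝ g x (EuclideanSpace.single i 1) := by
  simp only [← inner_gradient_left, PiLp.inner_apply]
  simp [mul_comm]

lemma lap_comp_add_smul (f : 𝔼 → ℝ) (y : 𝔼) (r : ℝ) (x : 𝔼) :
    lap (fun z => f (y + r • z)) x = r ^ 2 * lap f (y + r • x) := by
  have hfderiv (g : 𝔼 → ℝ) (z e : 𝔼) :
      fderiv ℝ (fun z => g (y + r • z)) z e = r * fderiv ℝ g (y + r • z) e := by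
    rw [← inner_gradient_left, gradient_comp_add_smul, inner_smul_left, inner_gradient_left]; rfl
  simp only [lap, Finset.mul_sum, hfderiv]
  refine Finset.sum_congr rfl fun i _ => ?_
  have hconst := congrFun (fderiv_const_smul_field (R := ℝ) (𝕜 := ℝ)
    (f := fun z => fderiv ℝ f (y + r • z) (EuclideanSpace.single i 1)) r) x
  simp only [Pi.smul_def, smul_eq_mul] at hconst
  rw [hconst, smul_apply, hfderiv (fun z => fderiv ℝ f z (EuclideanSpace.single i 1)),
    smul_eq_mul]
  ring

lemma lap_const_mul (c : ℝ) (f : 𝔼 → ℝ) (x : 𝔼) : lap (fun z => c * f z) x = c * lap f x := by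
  have hfderiv (g : 𝔼 → ℝ) (z : 𝔼) : fderiv ℝ (fun z => c * g z) z = c • fderiv ℝ g z :=
    congrFun (fderiv_const_smul_field (f := g) c) z
  simp only [lap, hfderiv, smul_apply, smul_eq_mul, Finset.mul_sum]

lemma lap_add_const (f : 𝔼 → ℝ) (c : ℝ) (x : 𝔼) : lap (fun z => f z + c) x = lap f x := by
  simp only [lap, fderiv_add_const]

variable {Ω : Set (EuclideanSpace ℝ (Fin N))} {f g ξ : EuclideanSpace ℝ (Fin N) → ℝ}

lemma contDiffOn_fderiv_apply (hΩ : IsOpen Ω) (hf : ContDiffOn ℝ 2 f Ω) (e : 𝔼) :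
    ContDiffOn ℝ 1 (fun x => fderiv ℝ f x e) Ω :=
  (hf.fderiv_of_isOpen hΩ (by norm_num)).clm_apply contDiffOn_const

lemma continuousOn_lap (hΩ : IsOpen Ω) (hf : ContDiffOn ℝ 2 f Ω) : ContinuousOn (lap f) Ω :=
  continuousOn_finsetSum _ fun _ _ => ((contDiffOn_fderiv_apply hΩ hf
    _).continuousOn_fderiv_of_isOpen hΩ le_rfl).clm_apply continuousOn_const

lemma lap_eq_zero_of_notMem_tsupport {x : 𝔼} (hx : x ∉ tsupport ξ) : lap ξ x = 0 := by
  refine Finset.sum_eq_zero fun i _ => ?_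
  rw [fderiv_of_notMem_tsupport ℝ fun h => hx (tsupport_fderiv_apply_subset ℝ _ h)]
  rfl

lemma IsCutoff.laplacian (hξ : IsCutoff 2 Ω ξ) : IsCutoff 0 Ω (lap ξ) := by
  have hsub : tsupport (lap ξ) ⊆ tsupport ξ :=
    closure_minimal (fun x hx => by_contra fun h => hx (lap_eq_zero_of_notMem_tsupport h))
      (isClosed_tsupport _)
  refine ⟨contDiff_zero.2 ?_, hξ.hasCompactSupport.of_isClosed_subset (isClosed_tsupport _) hsub,
    hsub.trans hξ.tsupport_subset⟩
  exact continuousOn_univ.1 (continuousOn_lap isOpen_univ hξ.contDiff.contDiffOn)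

lemma lap_sub (hΩ : IsOpen Ω) (hf : ContDiffOn ℝ 2 f Ω) (hg : ContDiffOn ℝ 2 g Ω) {x : 𝔼}
    (hx : x ∈ Ω) : lap (fun z => f z - g z) x = lap f x - lap g x := by
  have hdiff {n : ℕ} {h : 𝔼 → ℝ} (hh : ContDiffOn ℝ (n + 1) h Ω) {z : 𝔼} (hz : z ∈ Ω) :
      DifferentiableAt ℝ h z :=
    (hh.contDiffAt (hΩ.mem_nhds hz)).differentiableAt (by simp)
  rw [lap, lap, lap, ← Finset.sum_sub_distrib]
  refine Finset.sum_congr rfl fun i _ => ?_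
  have heq : (fun y => fderiv ℝ (fun z => f z - g z) y (EuclideanSpace.single i 1)) =ᶠ[nhds x]
      fun y => fderiv ℝ f y (EuclideanSpace.single i 1)
        - fderiv ℝ g y (EuclideanSpace.single i 1) := by
    filter_upwards [hΩ.mem_nhds hx] with y hy
    rw [fderiv_fun_sub (hdiff (n := 1) (by exact_mod_cast hf) hy)
      (hdiff (n := 1) (by exact_mod_cast hg) hy)]
    rfl
  rw [heq.fderiv_eq,
    fderiv_fun_sub (hdiff (n := 0) (by simpa using contDiffOn_fderiv_apply hΩ hf _) hx)
      (hdiff (n := 0) (by simpa using contDiffOn_fderiv_apply hΩ hg _) hx)]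
  rfl

lemma lap_comp (hΩ : IsOpen Ω) (hf : ContDiffOn ℝ 2 f Ω) {h h' : ℝ → ℝ} {h'' : ℝ}
    (hh : ∀ y ∈ Ω, HasDerivAt h (h' (f y)) (f y)) {x : 𝔼} (hh' : HasDerivAt h' h'' (f x))
    (hx : x ∈ Ω) :
    lap (fun y => h (f y)) x = h'' * ‖gradient f x‖ ^ 2 + h' (f x) * lap f x := by
  have hdiff {y : 𝔼} (hy : y ∈ Ω) : DifferentiableAt ℝ f y :=
    (hf.contDiffAt (hΩ.mem_nhds hy)).differentiableAt two_ne_zero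
  rw [← real_inner_self_eq_norm_sq, inner_gradient_eq_sum, lap, lap, Finset.mul_sum,
    Finset.mul_sum, ← Finset.sum_add_distrib]
  refine Finset.sum_congr rfl fun i _ => ?_
  have heq : (fun y => fderiv ℝ (fun z => h (f z)) y (EuclideanSpace.single i 1)) =ᶠ[nhds x]
      fun y => h' (f y) * fderiv ℝ f y (EuclideanSpace.single i 1) := by
    filter_upwards [hΩ.mem_nhds hx] with y hy
    rw [← inner_gradient_left, gradient_comp (hdiff hy) (hh y hy), inner_smul_left,
      inner_gradient_left]
    rfl
  have hfst := hh'.comp_hasFDerivAt x (hdiff hx).hasFDerivAt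
  have hsnd := (((contDiffOn_fderiv_apply hΩ hf (EuclideanSpace.single i 1)).contDiffAt
    (hΩ.mem_nhds hx)).differentiableAt one_ne_zero).hasFDerivAt
  have hmul := (hfst.mul hsnd).fderiv
  simp only [Pi.mul_def, Function.comp_def] at hmul
  rw [heq.fderiv_eq, hmul]
  simp only [add_apply, smul_apply, smul_eq_mul]
  ring

lemma integrable_inner_gradient (hΩ : IsOpen Ω) (hf : ContDiffOn ℝ 1 f Ω) (hξ : IsCutoff 1 Ω ξ) :
    Integrable (fun x => inner ℝ (gradient f x) (gradient ξ x)) := by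
  simp_rw [inner_gradient_eq_sum]
  refine integrable_finsetSum _ fun i _ =>
    (hξ.fderiv_apply (m := 0) (by simp) _).integrable_mul hΩ ?_
  exact (hf.continuousOn_fderiv_of_isOpen hΩ le_rfl).clm_apply continuousOn_const

theorem integral_inner_gradient_eq_integral_neg_lap_mul (hΩ : IsOpen Ω) (hf : ContDiffOn ℝ 2 f Ω)
    (hξ : IsCutoff 1 Ω ξ) :
    ∫ x, inner ℝ (gradient f x) (gradient ξ x) = ∫ x, -lap f x * ξ x := by
  have hfd (i : Fin N) := contDiffOn_fderiv_apply hΩ hf (EuclideanSpace.single i 1)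
  have hint (i : Fin N) := (hξ.fderiv_apply (m := 0) (by simp)
    (EuclideanSpace.single i 1)).integrable_mul (μ := volume) hΩ (hfd i).continuousOn
  have hint' (i : Fin N) := hξ.integrable_mul (μ := volume) hΩ
    (((hfd i).continuousOn_fderiv_of_isOpen hΩ le_rfl).clm_apply
      (continuousOn_const (c := EuclideanSpace.single i 1)))
  simp_rw [inner_gradient_eq_sum, lap, neg_mul, Finset.sum_mul]
  rw [integral_finsetSum _ fun i _ => hint i, integral_neg,
    integral_finsetSum _ fun i _ => hint' i, ← Finset.sum_neg_distrib]
  exact Finset.sum_congr rfl fun i _ =>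
    integral_mul_fderiv_eq_neg_fderiv_mul_of_isCutoff hΩ (hfd i) hξ _

theorem integral_inner_gradient_eq_integral_mul_neg_lap (hΩ : IsOpen Ω) (hf : ContDiffOn ℝ 1 f Ω)
    (hξ : IsCutoff 2 Ω ξ) :
    ∫ x, inner ℝ (gradient f x) (gradient ξ x) = ∫ x, f x * -lap ξ x := by
  have hξd (i : Fin N) := hξ.fderiv_apply (m := 1) (by norm_num) (EuclideanSpace.single i 1)
  have hint (i : Fin N) := (hξd i).integrable_mul (μ := volume) hΩ
    ((hf.continuousOn_fderiv_of_isOpen hΩ le_rfl).clm_apply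
      (continuousOn_const (c := EuclideanSpace.single i 1)))
  have hint' (i : Fin N) := ((hξd i).fderiv_apply (m := 0) (by simp)
    (EuclideanSpace.single i 1)).integrable_mul (μ := volume) hΩ hf.continuousOn
  simp_rw [inner_gradient_eq_sum, lap, mul_neg, Finset.mul_sum]
  rw [integral_finsetSum _ fun i _ => hint i, integral_neg,
    integral_finsetSum _ fun i _ => hint' i, ← Finset.sum_neg_distrib]
  refine Finset.sum_congr rfl fun i _ => ?_
  rw [integral_mul_fderiv_eq_neg_fderiv_mul_of_isCutoff hΩ hf (hξd i), neg_neg]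

end

/-! ### The Caccioppoli identity -/

section

variable {N : ℕ} {Ω : Set (EuclideanSpace ℝ (Fin N))} {w η : EuclideanSpace ℝ (Fin N) → ℝ} {t : ℝ}

/-- The ratio `t² / (4 (t - 1))` between the leading terms of `∫ |∇(w^(t/2) η)|²` and of
`∫ ∇w · ∇(w^(t-1) η²)`. -/
def caccioppoliConst (t : ℝ) : ℝ := t ^ 2 / (4 * (t - 1))

lemma caccioppoliConst_pos (ht : 1 < t) : 0 < caccioppoliConst t := by
  have : 0 < t - 1 := sub_pos.2 ht
  unfold caccioppoliConst
  positivity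

lemma norm_gradient_rpow_mul_sq (ht : 2 ≤ t) {x : EuclideanSpace ℝ (Fin N)} (hw0 : 0 ≤ w x)
    (hw : DifferentiableAt ℝ w x) (hη : DifferentiableAt ℝ η x) :
    ‖gradient (fun z => w z ^ (t / 2) * η z) x‖ ^ 2 =
      caccioppoliConst t * inner ℝ (gradient w x) (gradient (fun z => w z ^ (t - 1) * η z ^ 2) x)
        + (t - 2) / (4 * (t - 1))
          * inner ℝ (gradient (fun z => w z ^ t) x) (gradient (fun z => η z ^ 2) x)
        + w x ^ t * ‖gradient η x‖ ^ 2 := by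
  have hdiff {r : ℝ} (hr : 1 ≤ r) : DifferentiableAt ℝ (fun z => w z ^ r) x :=
    hw.rpow_const (Or.inr hr)
  have hsq : gradient (fun z => η z ^ 2) x = (2 * η x) • gradient η x := by
    simpa using gradient_comp hη (hasDerivAt_pow 2 (η x))
  have hpow : w x ^ (t / 2 - 1) * w x ^ (t / 2 - 1) = w x ^ (t - 1 - 1) := by
    rw [← rpow_add_of_nonneg hw0 (by linarith) (by linarith)]; ring_nf
  have hpow' : w x ^ (t / 2) * w x ^ (t / 2 - 1) = w x ^ (t - 1) := by
    rw [← rpow_add_of_nonneg hw0 (by linarith) (by linarith)]; ring_nf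
  have hpow'' : w x ^ (t / 2) * w x ^ (t / 2) = w x ^ t := by
    rw [← rpow_add_of_nonneg hw0 (by linarith) (by linarith)]; ring_nf
  rw [gradient_mul (hdiff (by linarith)) hη,
    gradient_mul (g := fun z => η z ^ 2) (hdiff (by linarith)) (hη.pow 2), hsq,
    gradient_rpow (by linarith) hw, gradient_rpow (by linarith) hw, gradient_rpow (by linarith) hw,
    norm_add_sq_real, norm_smul, norm_smul, mul_pow, mul_pow]
  simp only [inner_add_right, inner_smul_left, inner_smul_right, norm_smul, norm_mul, mul_pow,
    Real.norm_eq_abs, sq_abs, real_inner_self_eq_norm_sq, RCLike.conj_to_real, caccioppoliConst,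
    real_inner_comm (gradient w x) (gradient η x)]
  have ht1 : t - 1 ≠ 0 := by linarith
  rw [← hpow'', ← hpow', ← hpow]
  field_simp
  ring

theorem integral_norm_gradient_rpow_mul_sq (hΩ : IsOpen Ω) (ht : 2 ≤ t)
    (hw : ContDiffOn ℝ 2 w Ω) (hw0 : ∀ x ∈ Ω, 0 ≤ w x) (hη : IsCutoff 2 Ω η) :
    ∫ x, ‖gradient (fun z => w z ^ (t / 2) * η z) x‖ ^ 2 =
      caccioppoliConst t * (∫ x, -lap w x * (w x ^ (t - 1) * η x ^ 2))
        + ∫ x, w x ^ t * (‖gradient η x‖ ^ 2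
          - (t - 2) / (4 * (t - 1)) * lap (fun z => η z ^ 2) x) := by
  have hw1 : ContDiffOn ℝ 1 w Ω := hw.of_le one_le_two
  have hcut : IsCutoff 1 Ω (fun z => w z ^ (t - 1) * η z ^ 2) :=
    (hη.sq.of_le one_le_two).mul_left hΩ (hw1.rpow_const_of_le (m := 1) (by norm_num; linarith))
  have hwt : ContDiffOn ℝ 1 (fun z => w z ^ t) Ω :=
    hw1.rpow_const_of_le (m := 1) (by norm_num; linarith)
  have hη1 := hη.of_le (m := 1) one_le_two
  have hcut' : IsCutoff 1 Ω (fun z => w z ^ (t / 2) * η z) :=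
    hη1.mul_left hΩ (hw1.rpow_const_of_le (m := 1) (by norm_num; linarith))
  have hpt (x) : ‖gradient (fun z => w z ^ (t / 2) * η z) x‖ ^ 2 =
      caccioppoliConst t * inner ℝ (gradient w x) (gradient (fun z => w z ^ (t - 1) * η z ^ 2) x)
        + (t - 2) / (4 * (t - 1))
          * inner ℝ (gradient (fun z => w z ^ t) x) (gradient (fun z => η z ^ 2) x)
        + w x ^ t * ‖gradient η x‖ ^ 2 := by
    by_cases hx : x ∈ Ω
    · exact norm_gradient_rpow_mul_sq ht (hw0 x hx)
        ((hw.contDiffAt (hΩ.mem_nhds hx)).differentiableAt two_ne_zero)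
        (hη.contDiff.differentiable two_ne_zero x)
    · simp [hcut.gradient_eq_zero hx, hcut'.gradient_eq_zero hx, hη.gradient_eq_zero hx,
        hη.sq.gradient_eq_zero hx]
  have hint₁ := (integrable_inner_gradient hΩ hw1 hcut).const_mul (caccioppoliConst t)
  have hint₂ := (integrable_inner_gradient hΩ hwt hη1.sq).const_mul ((t - 2) / (4 * (t - 1)))
  have hint₃ := hη1.norm_gradient_sq.integrable_mul (μ := volume) hΩ hwt.continuousOn
  have hint₄ := hη.sq.laplacian.integrable_mul (μ := volume) hΩ hwt.continuousOn
  simp_rw [hpt, mul_sub (w _ ^ t), mul_left_comm _ ((t - 2) / (4 * (t - 1)))]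
  rw [integral_add (by exact hint₁.add hint₂) hint₃, integral_add hint₁ hint₂,
    integral_const_mul, integral_const_mul, integral_sub hint₃ (hint₄.const_mul _),
    integral_const_mul, integral_inner_gradient_eq_integral_neg_lap_mul hΩ hw hcut,
    integral_inner_gradient_eq_integral_mul_neg_lap hΩ hwt hη.sq]
  simp_rw [mul_neg, integral_neg]
  ring

theorem integral_norm_gradient_rpow_mul_sq_le (hΩ : IsOpen Ω) (ht : 2 ≤ t)
    (hw : ContDiffOn ℝ 2 w Ω) (hw0 : ∀ x ∈ Ω, 0 ≤ w x) (hη : IsCutoff 2 Ω η)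
    {g : EuclideanSpace ℝ (Fin N) → ℝ} (hg : ContinuousOn g Ω) (hgw : ∀ x ∈ Ω, -lap w x ≤ g x)
    {M : ℝ} (hM : ∀ x, ‖gradient η x‖ ^ 2 + |lap (fun z => η z ^ 2) x| ≤ M) :
    ∫ x, ‖gradient (fun z => w z ^ (t / 2) * η z) x‖ ^ 2 ≤
      caccioppoliConst t * (∫ x, g x * (w x ^ (t - 1) * η x ^ 2))
        + M * ∫ x in tsupport η, w x ^ t := by
  have hwr {r : ℝ} (hr : 0 ≤ r) : ContinuousOn (fun x => w x ^ r) Ω :=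
    hw.continuousOn.rpow_const fun _ _ => Or.inr hr
  have hcut := (hη.sq.of_le zero_le).mul_left_of_continuousOn hΩ (hwr (r := t - 1) (by linarith))
  have hrest : IsCutoff 0 (tsupport η) fun x =>
      ‖gradient η x‖ ^ 2 - (t - 2) / (4 * (t - 1)) * lap (fun z => η z ^ 2) x := by
    have hη' : IsCutoff 2 (tsupport η) η := ⟨hη.contDiff, hη.hasCompactSupport, Subset.rfl⟩
    exact (hη'.of_le one_le_two).norm_gradient_sq.sub (hη'.sq.laplacian.const_mul _)
  have hcoeff : |(t - 2) / (4 * (t - 1))| ≤ 1 := by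
    rw [abs_of_nonneg (div_nonneg (by linarith) (by linarith))]
    exact (div_le_one (by linarith)).2 (by linarith)
  have hwt : ContinuousOn (fun x => w x ^ t) (tsupport η) :=
    (hwr (by linarith)).mono hη.tsupport_subset
  rw [integral_norm_gradient_rpow_mul_sq hΩ ht hw hw0 hη]
  refine add_le_add (mul_le_mul_of_nonneg_left ?_ (caccioppoliConst_pos (by linarith)).le) ?_
  · refine integral_mono (hcut.integrable_mul hΩ (continuousOn_lap hΩ hw).neg)
      (hcut.integrable_mul hΩ hg) fun x => ?_
    by_cases hx : x ∈ Ω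
    · have := rpow_nonneg (hw0 x hx) (t - 1)
      exact mul_le_mul_of_nonneg_right (hgw x hx) (by positivity)
    · simp [hη.eq_zero hx]
  · rw [← setIntegral_eq_integral_of_forall_compl_eq_zero (s := tsupport η)
      fun x hx => by rw [hrest.eq_zero hx, mul_zero], ← integral_const_mul]
    refine setIntegral_mono_on (hwt.mul hrest.contDiff.continuous.continuousOn
      |>.integrableOn_compact hη.hasCompactSupport)
      (hwt.integrableOn_compact hη.hasCompactSupport |>.const_mul M)
      (isClosed_tsupport η).measurableSet fun x hx => ?_
    rw [mul_comm M]
    refine mul_le_mul_of_nonneg_left ?_ (rpow_nonneg (hw0 x (hη.tsupport_subset hx)) t)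
    calc _ ≤ ‖gradient η x‖ ^ 2 + |(t - 2) / (4 * (t - 1)) * lap (fun z => η z ^ 2) x| :=
          by
            linarith [neg_le_abs ((t - 2) / (4 * (t - 1)) * lap (fun z => η z ^ 2) x)]
      _ ≤ ‖gradient η x‖ ^ 2 + |lap (fun z => η z ^ 2) x| := by
          rw [abs_mul]
          gcongr
          exact mul_le_of_le_one_left (abs_nonneg _) hcoeff
      _ ≤ M := hM x

end

/-! ### A smooth positive part -/

section

variable {δ : ℝ}

/-- A `C²` convex substitute for the positive part `max t 0`, within `δ` of it: composed with it,
a `C²` function stays `C²` and Kato's inequality holds pointwise. -/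
def smoothPosPart (δ t : ℝ) : ℝ := ∫ x in (0 : ℝ)..t, smoothTransition (x / δ)

lemma hasDerivAt_smoothPosPart (δ t : ℝ) :
    HasDerivAt (smoothPosPart δ) (smoothTransition (t / δ)) t := by
  have h : Continuous fun x : ℝ => smoothTransition (x / δ) := by fun_prop
  exact intervalIntegral.integral_hasDerivAt_right (h.intervalIntegrable _ _)
    (h.stronglyMeasurableAtFilter _ _) h.continuousAt

lemma hasDerivAt_smoothTransition_div (δ t : ℝ) :
    HasDerivAt (fun x => smoothTransition (x / δ)) (deriv smoothTransition (t / δ) / δ) t := by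
  rw [div_eq_mul_one_div]
  exact (((smoothTransition.contDiff (n := 1)).differentiable one_ne_zero _).hasDerivAt).comp t
    ((hasDerivAt_id t).div_const δ)

lemma contDiff_smoothPosPart (δ : ℝ) : ContDiff ℝ 2 (smoothPosPart δ) := by
  have hderiv : deriv (smoothPosPart δ) = fun t => smoothTransition (t / δ) :=
    funext fun t => (hasDerivAt_smoothPosPart δ t).deriv
  rw [← one_add_one_eq_two, contDiff_succ_iff_deriv, hderiv]
  exact ⟨fun t => (hasDerivAt_smoothPosPart δ t).differentiableAt, by simp,
    smoothTransition.contDiff.comp (contDiff_id.div_const δ)⟩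

lemma monotone_smoothPosPart (δ : ℝ) : Monotone (smoothPosPart δ) :=
  monotone_of_hasDerivAt_nonneg (hasDerivAt_smoothPosPart δ) fun _ => smoothTransition.nonneg _

lemma smoothPosPart_of_nonpos (hδ : 0 < δ) {t : ℝ} (ht : t ≤ 0) : smoothPosPart δ t = 0 := by
  rw [smoothPosPart, intervalIntegral.integral_congr (g := fun _ => 0) fun x hx => ?_,
    intervalIntegral.integral_zero]
  rw [uIcc_of_ge ht] at hx
  exact smoothTransition.zero_of_nonpos (div_nonpos_of_nonpos_of_nonneg hx.2 hδ.le)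

lemma smoothPosPart_nonneg (hδ : 0 < δ) (t : ℝ) : 0 ≤ smoothPosPart δ t :=
  (smoothPosPart_of_nonpos hδ (min_le_right t 0)).symm.trans_le
    (monotone_smoothPosPart δ (min_le_left t 0))

lemma smoothPosPart_le (hδ : 0 < δ) (t : ℝ) : smoothPosPart δ t ≤ max t 0 := by
  rcases le_total t 0 with ht | ht
  · exact (smoothPosPart_of_nonpos hδ ht).trans_le (le_max_right t 0)
  · have hmono : Monotone fun t => t - smoothPosPart δ t :=
      monotone_of_hasDerivAt_nonneg
        (fun t => (hasDerivAt_id t).sub (hasDerivAt_smoothPosPart δ t))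
        fun t => sub_nonneg.2 (smoothTransition.le_one _)
    have h := hmono ht
    simp only [smoothPosPart_of_nonpos hδ le_rfl, sub_self, sub_nonneg] at h
    exact h.trans (le_max_left t 0)

lemma sub_le_smoothPosPart (hδ : 0 < δ) (t : ℝ) : t - δ ≤ smoothPosPart δ t := by
  rcases le_total t δ with ht | ht
  · exact (sub_nonpos.2 ht).trans (smoothPosPart_nonneg hδ t)
  · have hd (t) := (hasDerivAt_smoothPosPart δ t).sub (hasDerivAt_id t)
    have hmono : MonotoneOn (fun t => smoothPosPart δ t - t) (Ici δ) := by
      refine monotoneOn_of_hasDerivWithinAt_nonneg (convex_Ici δ)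
        (fun t _ => (hd t).continuousAt.continuousWithinAt)
        (fun t _ => (hd t).hasDerivWithinAt) fun t ht => ?_
      rw [interior_Ici] at ht
      rw [smoothTransition.one_of_one_le ((one_le_div hδ).2 (le_of_lt ht)), sub_self]
    have h := hmono self_mem_Ici ht ht
    linarith [smoothPosPart_nonneg hδ δ]

lemma smoothTransition_mul_lap_le {N : ℕ} {Ω : Set (EuclideanSpace ℝ (Fin N))}
    {w : EuclideanSpace ℝ (Fin N) → ℝ} (hΩ : IsOpen Ω) (hw : ContDiffOn ℝ 2 w Ω) (hδ : 0 < δ)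
    {x : EuclideanSpace ℝ (Fin N)} (hx : x ∈ Ω) :
    smoothTransition (w x / δ) * lap w x ≤ lap (fun z => smoothPosPart δ (w z)) x := by
  have hconvex : 0 ≤ deriv smoothTransition (w x / δ) / δ :=
    div_nonneg smoothTransition.monotone.deriv_nonneg hδ.le
  rw [lap_comp hΩ hw (fun y _ => hasDerivAt_smoothPosPart δ (w y))
    (hasDerivAt_smoothTransition_div δ (w x)) hx]
  exact le_add_of_nonneg_left (mul_nonneg hconvex (sq_nonneg _))

end

/-! ### The mean value inequality for subharmonic functions -/

section

variable {E : Type*} [NormedAddCommGroup E] [NormedSpace ℝ E] {r : ℝ}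

lemma preimage_add_smul_ball (x : E) (hr : 0 < r) (ρ : ℝ) :
    (fun z => x + r • z) ⁻¹' ball x (r * ρ) = ball 0 ρ := by
  ext z
  simp [dist_eq_norm, norm_smul, abs_of_pos hr, hr]

variable [FiniteDimensional ℝ E] [MeasurableSpace E] [BorelSpace E] {μ : Measure E}

lemma setIntegral_preimage_comp_add_smul [μ.IsAddHaarMeasure] (f : E → ℝ) (x : E) (hr : 0 < r)
    {S : Set E} (hS : MeasurableSet S) : ∫ z in (fun z => x + r • z) ⁻¹' S, f (x + r • z) ∂μ =
      (r ^ Module.finrank ℝ E)⁻¹ * ∫ z in S, f z ∂μ := by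
  have h := Measure.integral_comp_smul μ (fun z => S.indicator f (x + z)) r
  rw [integral_add_left_eq_self (μ := μ) (S.indicator f) x, integral_indicator hS, smul_eq_mul,
    abs_of_pos (by positivity)] at h
  rw [← h, ← integral_indicator ((by fun_prop : Measurable fun z => x + r • z) hS)]
  rfl

lemma setIntegral_ball_comp_add_smul [μ.IsAddHaarMeasure] (f : E → ℝ) (x : E) (hr : 0 < r)
    (ρ : ℝ) : ∫ z in ball 0 ρ, f (x + r • z) ∂μ =
      (r ^ Module.finrank ℝ E)⁻¹ * ∫ z in ball x (r * ρ), f z ∂μ := by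
  rw [← setIntegral_preimage_comp_add_smul f x hr measurableSet_ball, preimage_add_smul_ball x hr]

lemma hasDerivAt_setIntegral_ball_comp_add_smul_mul [IsFiniteMeasureOnCompacts μ] {Ω : Set E}
    {f ψ : E → ℝ} {x : E} {R : ℝ} (hΩ : IsOpen Ω) (hf : ContDiffOn ℝ 1 f Ω)
    (hψ : Continuous ψ) (hB : closedBall x R ⊆ Ω) (hr : |r| < R) :
    HasDerivAt (fun r => ∫ z in ball 0 1, f (x + r • z) * ψ z ∂μ)
      (∫ z in ball 0 1, fderiv ℝ f (x + r • z) z * ψ z ∂μ) r := by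
  have hmaps : MapsTo (fun q : ℝ × E => x + q.1 • q.2) (Icc (-R) R ×ˢ closedBall 0 1) Ω := by
    rintro ⟨r', z⟩ ⟨hr', hz⟩
    apply hB
    rw [mem_closedBall_zero_iff] at hz
    simpa [norm_smul] using
      mul_le_mul (abs_le.2 hr') hz (norm_nonneg z) ((abs_nonneg r).trans hr.le)
  have hcont : ContinuousOn (fun q : ℝ × E => f (x + q.1 • q.2) * ψ q.2)
      (Icc (-R) R ×ˢ closedBall 0 1) :=
    (hf.continuousOn.comp (by fun_prop) hmaps).mul (by fun_prop)
  have hcont' : ContinuousOn (fun q : ℝ × E => fderiv ℝ f (x + q.1 • q.2) q.2 * ψ q.2)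
      (Icc (-R) R ×ˢ closedBall 0 1) :=
    (((hf.continuousOn_fderiv_of_isOpen hΩ le_rfl).comp (by fun_prop) hmaps).clm_apply
      continuousOn_snd).mul (by fun_prop)
  have hslice {G : ℝ × E → ℝ} (hG : ContinuousOn G (Icc (-R) R ×ˢ closedBall 0 1)) {r' : ℝ}
      (hr' : r' ∈ Icc (-R) R) : IntegrableOn (fun z => G (r', z)) (ball 0 1) μ :=
    ((hG.comp (by fun_prop) fun z hz => ⟨hr', hz⟩).integrableOn_compact
      (isCompact_closedBall 0 1)).mono_set ball_subset_closedBall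
  obtain ⟨C, hC⟩ := (isCompact_Icc.prod (isCompact_closedBall 0 1)).exists_bound_of_continuousOn
    hcont'
  have hnhds : Ioo (-R) R ∈ nhds r := Ioo_mem_nhds (abs_lt.1 hr).1 (abs_lt.1 hr).2
  have hr' : r ∈ Icc (-R) R := abs_le.1 hr.le
  refine (hasDerivAt_integral_of_dominated_loc_of_deriv_le (bound := fun _ => C)
    (F := fun r z => f (x + r • z) * ψ z) (F' := fun r z => fderiv ℝ f (x + r • z) z * ψ z)
    hnhds ?_ (hslice hcont hr') (hslice hcont' hr').aestronglyMeasurable ?_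
    (integrableOn_const measure_ball_lt_top.ne) ?_).2
  · filter_upwards [hnhds] with r' hr'
    exact (hslice hcont (Ioo_subset_Icc_self hr')).aestronglyMeasurable
  · filter_upwards [ae_restrict_mem measurableSet_ball] with z hz r' hr'
    exact hC (r', z) ⟨Ioo_subset_Icc_self hr', ball_subset_closedBall hz⟩
  · filter_upwards [ae_restrict_mem measurableSet_ball] with z hz r' hr'
    have hfz : HasFDerivAt f (fderiv ℝ f (x + r' • z)) (x + r' • z) :=
      ((hf.contDiffAt (hΩ.mem_nhds (hmaps (x := (r', z))
        ⟨Ioo_subset_Icc_self hr', ball_subset_closedBall hz⟩))).differentiableAt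
        one_ne_zero).hasFDerivAt
    have hline : HasDerivAt (fun s : ℝ => x + s • z) z r' := by
      simpa using ((hasDerivAt_id r').smul_const z).const_add x
    exact (hfz.comp_hasDerivAt r' hline).mul_const (ψ z)

end

section

variable {E : Type*} [NormedAddCommGroup E]

/-- The averaging kernel of the mean value inequality. It is supported in the unit ball and
`-2 z` times it is the gradient of the cutoff `smoothPosPart 1 (1 - ‖z‖ ^ 2)`. -/
def meanValueKernel (z : E) : ℝ := smoothTransition (1 - ‖z‖ ^ 2)

lemma meanValueKernel_nonneg (z : E) : 0 ≤ meanValueKernel z := smoothTransition.nonneg _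

lemma meanValueKernel_le_one (z : E) : meanValueKernel z ≤ 1 := smoothTransition.le_one _

lemma meanValueKernel_of_one_le_norm {z : E} (hz : 1 ≤ ‖z‖) : meanValueKernel z = 0 :=
  smoothTransition.zero_of_nonpos (by nlinarith)

lemma continuous_meanValueKernel : Continuous (meanValueKernel : E → ℝ) :=
  smoothTransition.continuous.comp (by fun_prop)

lemma tsupport_meanValueKernel_subset : tsupport (meanValueKernel : E → ℝ) ⊆ closedBall 0 1 := by
  refine closure_minimal (fun z hz => ?_) isClosed_closedBall
  rw [mem_closedBall_zero_iff]
  exact (not_le.1 fun h => hz (meanValueKernel_of_one_le_norm h)).le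

lemma integral_meanValueKernel_pos [ProperSpace E] [MeasurableSpace E] [BorelSpace E]
    (μ : Measure E) [IsFiniteMeasureOnCompacts μ] [μ.IsOpenPosMeasure] :
    0 < ∫ z, meanValueKernel z ∂μ := by
  refine continuous_meanValueKernel.integral_pos_of_hasCompactSupport_nonneg_nonzero
    ((isCompact_closedBall 0 1).of_isClosed_subset (isClosed_tsupport _)
      tsupport_meanValueKernel_subset) meanValueKernel_nonneg (x := 0) ?_
  simp [meanValueKernel]

lemma setIntegral_ball_mul_meanValueKernel [MeasurableSpace E] {μ : Measure E} (f : E → ℝ) :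
    ∫ z in ball 0 1, f z * meanValueKernel z ∂μ = ∫ z, f z * meanValueKernel z ∂μ :=
  setIntegral_eq_integral_of_forall_compl_eq_zero fun z hz => by
    rw [meanValueKernel_of_one_le_norm (by simpa using hz), mul_zero]

variable [InnerProductSpace ℝ E]

lemma isCutoff_smoothPosPart_one_sub_norm_sq [ProperSpace E] {Ω : Set E}
    (hΩ : closedBall 0 1 ⊆ Ω) : IsCutoff 1 Ω fun z => smoothPosPart 1 (1 - ‖z‖ ^ 2) := by
  have hsub : tsupport (fun z : E => smoothPosPart 1 (1 - ‖z‖ ^ 2)) ⊆ closedBall 0 1 := by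
    refine closure_minimal (fun z hz => ?_) isClosed_closedBall
    contrapose! hz
    rw [mem_closedBall_zero_iff, not_le] at hz
    exact Function.notMem_support.2 (smoothPosPart_of_nonpos one_pos (by nlinarith))
  exact ⟨((contDiff_smoothPosPart 1).of_le one_le_two).comp
      (contDiff_const.sub (contDiff_norm_sq ℝ)),
    (isCompact_closedBall 0 1).of_isClosed_subset (isClosed_tsupport _) hsub, hsub.trans hΩ⟩

lemma gradient_smoothPosPart_one_sub_norm_sq [CompleteSpace E] (z : E) :
    gradient (fun z => smoothPosPart 1 (1 - ‖z‖ ^ 2)) z = (-2 * meanValueKernel z) • z := by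
  have hgrad : HasGradientAt (fun z : E => 1 - ‖z‖ ^ 2) (-((2 : ℝ) • z)) z := by
    rw [hasGradientAt_iff_hasFDerivAt]
    refine ((hasStrictFDerivAt_norm_sq z).hasFDerivAt.const_sub 1).congr_fderiv ?_
    ext w
    simp
  rw [gradient_comp hgrad.differentiableAt (hasDerivAt_smoothPosPart 1 _), hgrad.gradient,
    div_one, smul_neg, smul_smul, ← neg_smul, mul_comm, neg_mul]
  rfl

end

section

variable {N : ℕ} {Ω : Set (EuclideanSpace ℝ (Fin N))} {f : EuclideanSpace ℝ (Fin N) → ℝ}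
  {x : EuclideanSpace ℝ (Fin N)} {r R : ℝ}

lemma integral_fderiv_comp_add_smul_mul_meanValueKernel_nonneg (hΩ : IsOpen Ω)
    (hf : ContDiffOn ℝ 2 f Ω) (hsub : ∀ x ∈ Ω, 0 ≤ lap f x) (hB : closedBall x R ⊆ Ω)
    (hr : 0 < r) (hrR : r ≤ R) :
    0 ≤ ∫ z, fderiv ℝ f (x + r • z) z * meanValueKernel z := by
  have hcont : Continuous fun z : EuclideanSpace ℝ (Fin N) => x + r • z := by fun_prop
  have hmaps : closedBall 0 1 ⊆ (fun z => x + r • z) ⁻¹' Ω := fun z hz => hB <| by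
    rw [mem_closedBall_zero_iff] at hz
    simpa [norm_smul, abs_of_pos hr] using (mul_le_of_le_one_right hr.le hz).trans hrR
  have hcut := isCutoff_smoothPosPart_one_sub_norm_sq hmaps
  have hgreen := integral_inner_gradient_eq_integral_neg_lap_mul (f := fun z => f (x + r • z))
    (hΩ.preimage hcont) (hf.comp (by fun_prop) (mapsTo_preimage _ Ω)) hcut
  have hneg : ∫ z, -lap (fun z => f (x + r • z)) z * smoothPosPart 1 (1 - ‖z‖ ^ 2) ≤ 0 := by
    refine integral_nonpos fun z => ?_
    by_cases hz : x + r • z ∈ Ω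
    · rw [lap_comp_add_smul, neg_mul]
      exact neg_nonpos.2 (mul_nonneg (mul_nonneg (sq_nonneg r) (hsub _ hz))
        (smoothPosPart_nonneg one_pos _))
    · rw [hcut.eq_zero hz, mul_zero]
      exact le_rfl
  have hinner (z : EuclideanSpace ℝ (Fin N)) :
      inner ℝ (gradient (fun z => f (x + r • z)) z)
        (gradient (fun z => smoothPosPart 1 (1 - ‖z‖ ^ 2)) z) =
      -(2 * r) * (fderiv ℝ f (x + r • z) z * meanValueKernel z) := by
    rw [gradient_smoothPosPart_one_sub_norm_sq, gradient_comp_add_smul, inner_smul_left,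
      inner_smul_right, inner_gradient_left, RCLike.conj_to_real]
    ring
  rw [← hgreen] at hneg
  simp_rw [hinner] at hneg
  rw [integral_const_mul] at hneg
  exact nonneg_of_mul_nonpos_right hneg (by linarith)

theorem mul_integral_meanValueKernel_le (hΩ : IsOpen Ω) (hf : ContDiffOn ℝ 2 f Ω)
    (hsub : ∀ x ∈ Ω, 0 ≤ lap f x) (hB : closedBall x R ⊆ Ω) (hr : 0 ≤ r) (hrR : r < R) :
    f x * ∫ z : EuclideanSpace ℝ (Fin N), meanValueKernel z ≤
      ∫ z in ball 0 1, f (x + r • z) * meanValueKernel z := by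
  have hderiv (s) (hs : s ∈ Icc 0 r) :=
    hasDerivAt_setIntegral_ball_comp_add_smul_mul (μ := volume) hΩ (hf.of_le one_le_two)
      (continuous_meanValueKernel (E := EuclideanSpace ℝ (Fin N))) hB
      ((abs_of_nonneg hs.1).trans_lt (hs.2.trans_lt hrR))
  have hmono := monotoneOn_of_hasDerivWithinAt_nonneg (convex_Icc 0 r)
    (fun s hs => (hderiv s hs).continuousAt.continuousWithinAt)
    (fun s hs => (hderiv s (interior_subset hs)).hasDerivWithinAt) fun s hs => by
      rw [interior_Icc] at hs
      rw [setIntegral_ball_mul_meanValueKernel]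
      exact integral_fderiv_comp_add_smul_mul_meanValueKernel_nonneg hΩ hf hsub hB hs.1
        (hs.2.le.trans hrR.le)
  have h := hmono (left_mem_Icc.2 hr) (right_mem_Icc.2 hr) hr
  simpa only [zero_smul, add_zero, setIntegral_ball_mul_meanValueKernel (fun _ => f x),
    integral_const_mul] using h

theorem le_inv_mul_setIntegral_ball_of_lap_nonneg (hΩ : IsOpen Ω)
    (hf : ContDiffOn ℝ 2 f Ω) (hsub : ∀ x ∈ Ω, 0 ≤ lap f x) (hf0 : ∀ x ∈ Ω, 0 ≤ f x)
    (hB : closedBall x R ⊆ Ω) (hr : 0 < r) (hrR : r < R) :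
    f x ≤ (r ^ N * ∫ z : EuclideanSpace ℝ (Fin N), meanValueKernel z)⁻¹ * ∫ z in ball x r, f z := by
  have hcont : ContinuousOn (fun z => f (x + r • z)) (closedBall 0 1) :=
    hf.continuousOn.comp (by fun_prop) fun z hz => hB <| by
      rw [mem_closedBall_zero_iff] at hz
      simpa [norm_smul, abs_of_pos hr] using (mul_le_of_le_one_right hr.le hz).trans hrR.le
  have hint {g : EuclideanSpace ℝ (Fin N) → ℝ} (hg : ContinuousOn g (closedBall 0 1)) :
      IntegrableOn g (ball 0 1) :=
    (hg.integrableOn_compact (isCompact_closedBall 0 1)).mono_set ball_subset_closedBall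
  have hpos := integral_meanValueKernel_pos (volume : Measure (EuclideanSpace ℝ (Fin N)))
  rw [mul_inv_rev, mul_assoc, ← div_eq_inv_mul, le_div_iff₀ hpos]
  calc _ ≤ ∫ z in ball 0 1, f (x + r • z) * meanValueKernel z :=
        mul_integral_meanValueKernel_le hΩ hf hsub hB hr.le hrR
    _ ≤ ∫ z in ball 0 1, f (x + r • z) := by
        refine setIntegral_mono_on (hint (hcont.mul continuous_meanValueKernel.continuousOn))
          (hint hcont) measurableSet_ball fun z hz => mul_le_of_le_one_right (hf0 _ (hB ?_))
            (meanValueKernel_le_one z)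
        rw [mem_ball_zero_iff] at hz
        simpa [norm_smul, abs_of_pos hr] using (mul_le_of_le_one_right hr.le hz.le).trans hrR.le
    _ = (r ^ N)⁻¹ * ∫ z in ball x r, f z := by
        rw [setIntegral_ball_comp_add_smul f x hr, mul_one, finrank_euclideanSpace_fin]

end

/-! ### Approximation by test functions -/

section

open Filter Topology
open scoped Convolution

lemma tendsto_setIntegral_mul_sq_of_tendstoUniformlyOn {X ι : Type*} [TopologicalSpace X]
    [T2Space X] [MeasurableSpace X] [BorelSpace X]
    {μ : Measure X} [IsFiniteMeasureOnCompacts μ] {K : Set X} {W g : X → ℝ} {G : ι → X → ℝ}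
    {l : Filter ι} [l.NeBot] [l.IsCountablyGenerated] (hK : IsCompact K) (hW : ContinuousOn W K)
    (hG : ∀ i, ContinuousOn (G i) K) (hlim : TendstoUniformlyOn G g l K) :
    Tendsto (fun i => ∫ x in K, W x * G i x ^ 2 ∂μ) l (𝓝 (∫ x in K, W x * g x ^ 2 ∂μ)) := by
  obtain ⟨C, hC⟩ := hK.exists_bound_of_continuousOn hW
  obtain ⟨M, hM⟩ := hK.exists_bound_of_continuousOn
    (hlim.continuousOn (Eventually.of_forall hG).frequently)
  have hbound : ∀ᶠ i in l, ∀ x ∈ K, ‖G i x‖ ≤ M + 1 :=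
    (uniformContinuous_norm.comp_tendstoUniformlyOn hlim).eventually_forall_le (lt_add_one M) hM
  refine tendsto_integral_filter_of_dominated_convergence (fun _ => C * (M + 1) ^ 2)
    (Eventually.of_forall fun i =>
      (hW.mul ((hG i).pow 2)).aestronglyMeasurable_of_isCompact hK hK.measurableSet)
    (hbound.mono fun i hi => ?_) (integrableOn_const hK.measure_ne_top) ?_
  · filter_upwards [ae_restrict_mem hK.measurableSet] with x hx
    rw [norm_mul, norm_pow]
    have := hC x hx
    have := hi x hx
    gcongr
    exact (norm_nonneg _).trans (hC x hx)
  · filter_upwards [ae_restrict_mem hK.measurableSet] with x hx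
    exact ((hlim.tendsto_at hx).pow 2).const_mul (W x)

variable {E : Type*} [NormedAddCommGroup E] [NormedSpace ℝ E] [FiniteDimensional ℝ E]
  [HasContDiffBump E] [MeasurableSpace E] [BorelSpace E] {μ : Measure E} [μ.IsAddHaarMeasure]

lemma tendstoUniformly_normed_convolution {F ι : Type*} [NormedAddCommGroup F]
    [NormedSpace ℝ F] [CompleteSpace F] {l : Filter ι} {b : ι → ContDiffBump (0 : E)}
    (hb : Tendsto (fun i => (b i).rOut) l (𝓝 0)) {g : E → F} (hg : UniformContinuous g) :
    TendstoUniformly (fun i => (b i).normed μ ⋆[ContinuousLinearMap.lsmul ℝ ℝ, μ] g) g l := by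
  rw [Metric.tendstoUniformly_iff]
  intro ε hε
  obtain ⟨δ, hδ, hgδ⟩ := Metric.uniformContinuous_iff.1 hg (ε / 2) (half_pos hε)
  filter_upwards [hb.eventually_lt_const hδ] with i hi x
  rw [dist_comm]
  refine (ContDiffBump.dist_normed_convolution_le hg.continuous.aestronglyMeasurable
    fun y hy => (hgδ ?_).le).trans_lt (half_lt_self hε)
  exact (mem_ball.1 hy).trans hi

lemma fderiv_normed_convolution (b : ContDiffBump (0 : E)) {φ : E → ℝ} (hφ : ContDiff ℝ 1 φ)
    (hc : HasCompactSupport φ) :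
    fderiv ℝ (b.normed μ ⋆[ContinuousLinearMap.lsmul ℝ ℝ, μ] φ) =
      b.normed μ ⋆[ContinuousLinearMap.lsmul ℝ ℝ, μ] (fderiv ℝ φ) :=
  funext fun x => (hc.hasFDerivAt_convolution_right (ContinuousLinearMap.lsmul ℝ ℝ)
    b.continuous_normed.locallyIntegrable hφ x).fderiv

lemma isCutoff_normed_convolution (b : ContDiffBump (0 : E)) {φ : E → ℝ} {K : Set E} {δ : ℝ}
    (hφ : IsCutoff 0 K φ) (hbδ : b.rOut ≤ δ) :
    IsCutoff (⊤ : ℕ∞) (cthickening δ (tsupport φ))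
      (b.normed μ ⋆[ContinuousLinearMap.lsmul ℝ ℝ, μ] φ) := by
  have hsub : tsupport (b.normed μ ⋆[ContinuousLinearMap.lsmul ℝ ℝ, μ] φ) ⊆
      cthickening δ (tsupport φ) := by
    refine closure_minimal (fun x hx => ?_) isClosed_cthickening
    obtain ⟨u, hu, v, hv, rfl⟩ := support_convolution_subset _ hx
    rw [b.support_normed_eq, mem_ball_zero_iff] at hu
    refine mem_cthickening_of_dist_le _ v δ _ (subset_tsupport φ hv) ?_
    simpa [dist_eq_norm] using hu.le.trans hbδ
  exact ⟨b.hasCompactSupport_normed.contDiff_convolution_left _ b.contDiff_normed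
      hφ.contDiff.continuous.locallyIntegrable,
    (hφ.hasCompactSupport.isCompact.cthickening).of_isClosed_subset (isClosed_tsupport _) hsub,
    hsub⟩

theorem IsCutoff.exists_seq_tendstoUniformly {Ω : Set E} (hΩ : IsOpen Ω) {φ : E → ℝ}
    (hφ : IsCutoff 1 Ω φ) : ∃ (K : Set E) (ψ : ℕ → E → ℝ), IsCompact K ∧ K ⊆ Ω ∧
      IsCutoff 1 K φ ∧ (∀ n, IsCutoff (⊤ : ℕ∞) K (ψ n)) ∧ TendstoUniformly ψ φ atTop ∧
      TendstoUniformly (fun n => fderiv ℝ (ψ n)) (fderiv ℝ φ) atTop := by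
  have hφ' : IsCutoff 1 (tsupport φ) φ := ⟨hφ.contDiff, hφ.hasCompactSupport, Subset.rfl⟩
  obtain ⟨δ, hδ, hδΩ⟩ := hφ.hasCompactSupport.isCompact.exists_cthickening_subset_open hΩ
    hφ.tsupport_subset
  let b (n : ℕ) : ContDiffBump (0 : E) :=
    ⟨δ / (n + 1) / 2, δ / (n + 1), by positivity, half_lt_self (by positivity)⟩
  have hb : Tendsto (fun n => (b n).rOut) atTop (𝓝 0) := by
    exact ((tendsto_const_div_atTop_nhds_zero_nat δ).comp (tendsto_add_atTop_nat 1)).congr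
      fun n => by simp [b]
  have hbδ (n : ℕ) : (b n).rOut ≤ δ := div_le_self hδ.le (by simp)
  refine ⟨cthickening δ (tsupport φ),
    fun n => (b n).normed Measure.addHaar ⋆[ContinuousLinearMap.lsmul ℝ ℝ, Measure.addHaar] φ,
    hφ.hasCompactSupport.isCompact.cthickening, hδΩ, hφ'.mono (self_subset_cthickening _),
    fun n => isCutoff_normed_convolution (b n) (hφ'.of_le zero_le) (hbδ n),
    tendstoUniformly_normed_convolution hb
      (hφ.hasCompactSupport.uniformContinuous_of_continuous hφ.contDiff.continuous), ?_⟩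
  simp_rw [fderiv_normed_convolution _ hφ.contDiff hφ.hasCompactSupport]
  exact tendstoUniformly_normed_convolution hb
    ((hφ.hasCompactSupport.fderiv (𝕜 := ℝ)).uniformContinuous_of_continuous
      (hφ.contDiff.continuous_fderiv one_ne_zero))

end

/-! ### Stable potentials -/

/-- The Schrödinger operator `-Δ - W` is nonnegative on `Ω`: the weighted Hardy inequality
`∫_Ω W φ² ≤ ∫_Ω |∇φ|²` holds for test functions. The stability of `(u, v)` is the case
`W = √(λγpθ) (v+1)^((p-1)/2) (u+1)^((θ-1)/2)`. -/
def IsStablePotential {E : Type*} [NormedAddCommGroup E] [InnerProductSpace ℝ E] [CompleteSpace E]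
    [MeasureSpace E] (Ω : Set E) (W : E → ℝ) : Prop :=
  ∀ φ : E → ℝ, IsCutoff (⊤ : ℕ∞) Ω φ →
    ∫ x in Ω, W x * φ x ^ 2 ≤ ∫ x in Ω, ‖gradient φ x‖ ^ 2

namespace IsStablePotential

open Filter

variable {E : Type*} [NormedAddCommGroup E] [InnerProductSpace ℝ E] [FiniteDimensional ℝ E]
  [MeasurableSpace E] [BorelSpace E] {Ω : Set E} {W : E → ℝ}

lemma integral_mul_sq_le (hW : IsStablePotential Ω W) (hΩ : IsOpen Ω) (hWc : ContinuousOn W Ω)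
    {φ : E → ℝ} (hφ : IsCutoff 1 Ω φ) :
    ∫ x, W x * φ x ^ 2 ≤ ∫ x, ‖gradient φ x‖ ^ 2 := by
  obtain ⟨K, ψ, hK, hKΩ, hφK, hψK, hψ, hdψ⟩ := hφ.exists_seq_tendstoUniformly hΩ
  have hmass {f : E → ℝ} {S : Set E} (hf : ∀ x ∉ S, f x = 0) :
      ∫ x in S, W x * f x ^ 2 = ∫ x, W x * f x ^ 2 :=
    setIntegral_eq_integral_of_forall_compl_eq_zero fun x hx => by simp [hf x hx]
  have henergy {n : WithTop ℕ∞} {f : E → ℝ} {S : Set E} (hf : IsCutoff n S f) :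
      ∫ x in S, 1 * ‖fderiv ℝ f x‖ ^ 2 = ∫ x, ‖gradient f x‖ ^ 2 := by
    have hnorm (x : E) : 1 * ‖fderiv ℝ f x‖ ^ 2 = ‖gradient f x‖ ^ 2 := by
      rw [gradient, LinearIsometryEquiv.norm_map, one_mul]
    simp only [hnorm]
    exact setIntegral_eq_integral_of_forall_compl_eq_zero fun x hx => by
      simp [hf.gradient_eq_zero hx]
  have hlim := tendsto_setIntegral_mul_sq_of_tendstoUniformlyOn (μ := volume) hK (hWc.mono hKΩ)
    (fun n => (hψK n).contDiff.continuous.continuousOn) hψ.tendstoUniformlyOn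
  have hlim' := tendsto_setIntegral_mul_sq_of_tendstoUniformlyOn (μ := volume) (W := fun _ => 1) hK
    continuousOn_const
    (fun n => ((hψK n).contDiff.continuous_fderiv (by simp)).norm.continuousOn)
    (uniformContinuous_norm.comp_tendstoUniformly hdψ).tendstoUniformlyOn
  rw [← hmass fun _ => hφK.eq_zero, ← henergy hφK]
  refine le_of_tendsto_of_tendsto' hlim hlim' fun n => ?_
  have hn := hW (ψ n) ((hψK n).mono hKΩ)
  rwa [hmass fun _ => ((hψK n).mono hKΩ).eq_zero, ← hmass fun _ => (hψK n).eq_zero,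
    (((hψK n).mono hKΩ).of_le (by simp)).norm_gradient_sq.setIntegral_eq, ← henergy (hψK n)] at hn

lemma comp_add_smul (hW : IsStablePotential Ω W) (hΩ : IsOpen Ω) (y : E) {r : ℝ} (hr : 0 < r) :
    IsStablePotential ((fun z => y + r • z) ⁻¹' Ω) (fun z => r ^ 2 * W (y + r • z)) := by
  intro φ hφ
  obtain ⟨ψ, hψ, rfl⟩ : ∃ ψ, IsCutoff (⊤ : ℕ∞) Ω ψ ∧ φ = fun z => ψ (y + r • z) := by
    refine ⟨fun x => φ (-(r⁻¹ • y) + r⁻¹ • x), ?_, ?_⟩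
    · have h := hφ.comp_add_smul (-(r⁻¹ • y)) (inv_ne_zero hr.ne')
      simpa [preimage_preimage, smul_add, smul_smul, hr.ne'] using h
    · simp [smul_add, smul_smul, hr.ne']
  have hmul (f : E → ℝ) : ∫ z in (fun z => y + r • z) ⁻¹' Ω, r ^ 2 * f (y + r • z) =
      r ^ 2 * ((r ^ Module.finrank ℝ E)⁻¹ * ∫ x in Ω, f x) := by
    rw [integral_const_mul, setIntegral_preimage_comp_add_smul f y hr hΩ.measurableSet]
  have hscaled : (fun z => ‖gradient (fun z => ψ (y + r • z)) z‖ ^ 2) =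
      fun z => r ^ 2 * ‖gradient ψ (y + r • z)‖ ^ 2 := by
    funext z
    rw [gradient_comp_add_smul, norm_smul, mul_pow, Real.norm_eq_abs, sq_abs]
  rw [hscaled, hmul fun x => ‖gradient ψ x‖ ^ 2]
  simp only [mul_assoc]
  rw [hmul fun x => W x * ψ x ^ 2]
  have := hW ψ hψ
  gcongr

lemma congr {W' : E → ℝ} (hW : IsStablePotential Ω W) (hΩ : MeasurableSet Ω) (h : EqOn W W' Ω) :
    IsStablePotential Ω W' := fun φ hφ =>
  (setIntegral_congr_fun hΩ fun x hx => congrArg (· * φ x ^ 2) (h hx)).symm.trans_le (hW φ hφ)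

end IsStablePotential

lemma IsStable.isStablePotential {N : ℕ} {Ω : Set (EuclideanSpace ℝ (Fin N))}
    {lam gam p θ : ℝ} {u v : EuclideanSpace ℝ (Fin N) → ℝ} (h : IsStable Ω lam gam p θ u v) :
    IsStablePotential Ω (fun x => √(lam * gam * p * θ) *
      ((v x + 1) ^ ((p - 1) / 2) * (u x + 1) ^ ((θ - 1) / 2))) := by
  intro φ hφ
  simp only [mul_assoc √_, integral_const_mul]
  exact h φ ⟨hφ.contDiff, hφ.hasCompactSupport, hφ.tsupport_subset⟩

/-! ### Integral inequalities -/

section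

variable {α : Type*} [MeasurableSpace α] {μ : Measure α} [IsFiniteMeasure μ] {f : α → ℝ} {r : ℝ}

lemma rpow_integral_le_mul_integral_rpow (hr : 1 ≤ r) (hf0 : 0 ≤ᵐ[μ] f) (hf : Integrable f μ)
    (hfr : Integrable (fun x => f x ^ r) μ) :
    (∫ x, f x ∂μ) ^ r ≤ μ.real univ ^ (r - 1) * ∫ x, f x ^ r ∂μ := by
  rcases eq_zero_or_neZero μ with rfl | hμ
  · simp [zero_rpow (by linarith : r ≠ 0)]
  have hμ0 : 0 < μ.real univ := measureReal_univ_pos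
  have hJ := (convexOn_rpow hr).map_average_le (continuous_rpow_const (by linarith)).continuousOn
    isClosed_Ici hf0 hf hfr
  rw [average_eq, average_eq, smul_eq_mul, smul_eq_mul,
    mul_rpow (by positivity) (integral_nonneg_of_ae hf0), inv_rpow hμ0.le] at hJ
  calc (∫ x, f x ∂μ) ^ r
      = μ.real univ ^ r * ((μ.real univ ^ r)⁻¹ * (∫ x, f x ∂μ) ^ r) := by field_simp
    _ ≤ μ.real univ ^ r * ((μ.real univ)⁻¹ * ∫ x, f x ^ r ∂μ) := by gcongr
    _ = μ.real univ ^ (r - 1) * ∫ x, f x ^ r ∂μ := by rw [rpow_sub_one hμ0.ne']; ring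

/- Chebyshev's argument: `f` and `f ^ r` are similarly ordered, so `f - m` and `f ^ r - m ^ r` have
the same sign for every `m ≥ 0`; take `m` to be the mean of `f`. -/
lemma integral_mul_integral_rpow_le (hr : 0 ≤ r) (hf0 : 0 ≤ᵐ[μ] f) (hf : Integrable f μ)
    (hfr : Integrable (fun x => f x ^ r) μ) (hfr' : Integrable (fun x => f x ^ (r + 1)) μ) :
    (∫ x, f x ∂μ) * ∫ x, f x ^ r ∂μ ≤ μ.real univ * ∫ x, f x ^ (r + 1) ∂μ := by
  rcases eq_zero_or_neZero μ with rfl | hμ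
  · simp
  have hμ0 : 0 < μ.real univ := measureReal_univ_pos
  obtain ⟨m, hm⟩ : ∃ m, m = (μ.real univ)⁻¹ * ∫ x, f x ∂μ := ⟨_, rfl⟩
  have hm0 : 0 ≤ m := hm ▸ mul_nonneg (by positivity) (integral_nonneg_of_ae hf0)
  have hfm : ∫ x, f x ∂μ = μ.real univ * m := by rw [hm]; field_simp
  have hpos : 0 ≤ ∫ x, (f x - m) * (f x ^ r - m ^ r) ∂μ := by
    refine integral_nonneg_of_ae (hf0.mono fun x hx => ?_)
    rcases le_total m (f x) with h | h
    · exact mul_nonneg (sub_nonneg.2 h) (sub_nonneg.2 (rpow_le_rpow hm0 h hr))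
    · exact mul_nonneg_of_nonpos_of_nonpos (sub_nonpos.2 h) (sub_nonpos.2 (rpow_le_rpow hx h hr))
  have hexpand : (fun x => (f x - m) * (f x ^ r - m ^ r)) =ᵐ[μ]
      fun x => f x ^ (r + 1) - m * f x ^ r - m ^ r * (f x - m) := by
    filter_upwards [hf0] with x hx
    rw [rpow_add_one' hx (by linarith)]
    ring
  rw [integral_congr_ae hexpand, integral_sub (by exact hfr'.sub (hfr.const_mul m))
    (by exact (hf.sub (integrable_const m)).const_mul _), integral_sub hfr' (hfr.const_mul m),
    integral_const_mul, integral_const_mul, integral_sub hf (integrable_const m), integral_const,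
    smul_eq_mul, hfm, sub_self, mul_zero, sub_zero, sub_nonneg] at hpos
  rw [hfm, mul_assoc]
  gcongr

end

lemma rpow_integral_abs_rpow_le_mul_integral_norm_gradient_sq {E : Type*} [NormedAddCommGroup E]
    [InnerProductSpace ℝ E] [FiniteDimensional ℝ E] [MeasurableSpace E] [BorelSpace E]
    {μ : Measure E} [μ.IsAddHaarMeasure] {κ : ℝ} (hE : 2 < Module.finrank ℝ E)
    (hκ : κ = Module.finrank ℝ E / (Module.finrank ℝ E - 2)) {Ω : Set E} {φ : E → ℝ}
    (hφ : IsCutoff 1 Ω φ) :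
    (∫ x, |φ x| ^ (2 * κ) ∂μ) ^ κ⁻¹ ≤
      eLpNormLESNormFDerivOfEqInnerConst μ 2 ^ 2 * ∫ x, ‖gradient φ x‖ ^ 2 ∂μ := by
  have hn : (2 : ℝ) < Module.finrank ℝ E := by exact_mod_cast hE
  have hn2 : (0 : ℝ) < Module.finrank ℝ E - 2 := by linarith
  have hκ0 : 0 < κ := by rw [hκ]; positivity
  lift κ to NNReal using hκ0.le
  have hexp : (((2 * κ : NNReal) : ℝ))⁻¹ = ((2 : NNReal) : ℝ)⁻¹ - (Module.finrank ℝ E : ℝ)⁻¹ := by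
    push_cast
    rw [hκ]
    field_simp
  have h := eLpNorm_le_eLpNorm_fderiv_of_eq_inner μ hφ.contDiff hφ.hasCompactSupport
    one_le_two (by omega) hexp
  have hφL : MemLp φ (2 * κ : NNReal) μ :=
    hφ.contDiff.continuous.memLp_of_hasCompactSupport hφ.hasCompactSupport
  have hφ'L : MemLp (fderiv ℝ φ) (2 : NNReal) μ :=
    (hφ.contDiff.continuous_fderiv one_ne_zero).memLp_of_hasCompactSupport
      (hφ.hasCompactSupport.fderiv (𝕜 := ℝ))
  have hκ2 : (2 * κ : NNReal) ≠ 0 := by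
    have : κ ≠ 0 := fun h => by simp [h] at hκ0
    simp [this]
  rw [hφL.eLpNorm_eq_integral_rpow_norm (by exact_mod_cast hκ2) ENNReal.coe_ne_top,
    hφ'L.eLpNorm_eq_integral_rpow_norm (by norm_num) ENNReal.coe_ne_top,
    ← ENNReal.ofReal_coe_nnreal (p := eLpNormLESNormFDerivOfEqInnerConst _ _),
    ← ENNReal.ofReal_mul (by positivity),
    ENNReal.ofReal_le_ofReal_iff (by positivity)] at h
  have hgrad (x : E) : ‖gradient φ x‖ ^ 2 = ‖fderiv ℝ φ x‖ ^ (2 : ℝ) := by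
    rw [gradient, LinearIsometryEquiv.norm_map, rpow_two]
  have hroot {a b c : ℝ} (ha : 0 ≤ a) (hb : 0 ≤ b)
      (hab : a ^ ((2 : ℝ) * κ)⁻¹ ≤ c * b ^ (2 : ℝ)⁻¹) : a ^ (κ : ℝ)⁻¹ ≤ c ^ 2 * b := by
    calc a ^ (κ : ℝ)⁻¹ = (a ^ ((2 : ℝ) * κ)⁻¹) ^ 2 := by
          rw [← rpow_mul_natCast ha]
          congr 1
          field_simp
          norm_num
      _ ≤ (c * b ^ (2 : ℝ)⁻¹) ^ 2 := by gcongr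
      _ = c ^ 2 * b := by rw [mul_pow, ← rpow_mul_natCast hb]; norm_num
  simp only [hgrad]
  exact hroot (by positivity) (by positivity) h

lemma rpow_setIntegral_rpow_le_mul_integral_norm_gradient_sq {E : Type*} [NormedAddCommGroup E]
    [InnerProductSpace ℝ E] [FiniteDimensional ℝ E] [MeasurableSpace E] [BorelSpace E]
    {μ : Measure E} [μ.IsAddHaarMeasure] {κ : ℝ} (hE : 2 < Module.finrank ℝ E)
    (hκ : κ = Module.finrank ℝ E / (Module.finrank ℝ E - 2)) {Ω B : Set E} (hΩ : IsOpen Ω)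
    {w η : E → ℝ} (hw : ContDiffOn ℝ 1 w Ω) (hw0 : ∀ x ∈ Ω, 0 < w x) (hη : IsCutoff 1 Ω η)
    (hB : MeasurableSet B) (hBη : ∀ x ∈ B, η x = 1) (t : ℝ) :
    (∫ x in B, w x ^ (κ * t) ∂μ) ^ κ⁻¹ ≤ eLpNormLESNormFDerivOfEqInnerConst μ 2 ^ 2 *
      ∫ x, ‖gradient (fun z => w z ^ (t / 2) * η z) x‖ ^ 2 ∂μ := by
  have hn : (2 : ℝ) < Module.finrank ℝ E := by exact_mod_cast hE
  have hκ0 : 0 < κ := hκ ▸ div_pos (by linarith) (by linarith)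
  have hφ : IsCutoff 1 Ω fun z => w z ^ (t / 2) * η z :=
    hη.mul_left hΩ (hw.rpow_const_of_ne fun x hx => (hw0 x hx).ne')
  have hBΩ (x) (hx : x ∈ B) : x ∈ Ω := by
    by_contra hxΩ
    exact one_ne_zero ((hBη x hx).symm.trans (hη.eq_zero hxΩ))
  refine le_trans ?_ (rpow_integral_abs_rpow_le_mul_integral_norm_gradient_sq hE hκ hφ)
  refine rpow_le_rpow (setIntegral_nonneg hB fun x hx => rpow_nonneg (hw0 x (hBΩ x hx)).le _) ?_
    (by positivity)
  calc ∫ x in B, w x ^ (κ * t) ∂μ = ∫ x in B, |w x ^ (t / 2) * η x| ^ (2 * κ) ∂μ :=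
        setIntegral_congr_fun hB fun x hx => by
          have hwx := (hw0 x (hBΩ x hx)).le
          simp only [hBη x hx, mul_one, abs_of_nonneg (rpow_nonneg hwx _), ← rpow_mul hwx]
          congr 1
          ring
    _ ≤ ∫ x, |w x ^ (t / 2) * η x| ^ (2 * κ) ∂μ := by
        refine setIntegral_le_integral (Continuous.integrable_of_hasCompactSupport
          (hφ.contDiff.continuous.abs.rpow_const fun _ => Or.inr (by positivity)) ?_)
          (.of_forall fun x => by positivity)
        exact hφ.hasCompactSupport.comp_left (g := fun y : ℝ => |y| ^ (2 * κ))
          (by simp [zero_rpow (mul_pos two_pos hκ0).ne'])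

lemma integral_mul_sq_le_setIntegral {X : Type*} [MeasurableSpace X] {μ : Measure X} {S : Set X}
    {f η : X → ℝ} (hS : MeasurableSet S) (hf : IntegrableOn f S μ) (hf0 : ∀ x ∈ S, 0 ≤ f x)
    (hη : ∀ x ∉ S, η x = 0) (hη1 : ∀ x, η x ^ 2 ≤ 1) :
    ∫ x, f x * η x ^ 2 ∂μ ≤ ∫ x in S, f x ∂μ := by
  rw [← setIntegral_eq_integral_of_forall_compl_eq_zero fun x hx => by simp [hη x hx]]
  exact integral_mono_of_nonneg
    (ae_restrict_of_forall_mem hS fun x hx => mul_nonneg (hf0 x hx) (sq_nonneg _)) hf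
    (ae_restrict_of_forall_mem hS fun x hx => mul_le_of_le_one_right (hf0 x hx) (hη1 x))

lemma mul_integral_rpow_mul_sq_le {X : Type*} [MeasurableSpace X] {μ : Measure X} {S : Set X}
    {f η : X → ℝ} {c C r : ℝ} (hS : MeasurableSet S) (hμS : μ S ≠ ⊤) (hr : 0 ≤ r)
    (hf0 : ∀ x ∈ S, 0 ≤ f x) (hf : IntegrableOn f S μ)
    (hfr : IntegrableOn (fun x => f x ^ r) S μ) (hfr' : IntegrableOn (fun x => f x ^ (r + 1)) S μ)
    (hη : ∀ x ∉ S, η x = 0) (hη1 : ∀ x, η x ^ 2 ≤ 1) (hC : 0 ≤ C)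
    (hc : c ≤ C * ∫ x in S, f x ∂μ) :
    c * ∫ x, f x ^ r * η x ^ 2 ∂μ ≤ C * (μ.real S * ∫ x in S, f x ^ (r + 1) ∂μ) := by
  have hfinite : IsFiniteMeasure (μ.restrict S) := isFiniteMeasure_restrict.2 hμS
  have hcheb := integral_mul_integral_rpow_le hr (ae_restrict_of_forall_mem hS hf0) hf hfr hfr'
  rw [measureReal_restrict_apply_univ] at hcheb
  have hfr0 (x) (hx : x ∈ S) : 0 ≤ f x ^ r := rpow_nonneg (hf0 x hx) r
  have hnonneg : 0 ≤ ∫ x, f x ^ r * η x ^ 2 ∂μ := integral_nonneg fun x => by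
    by_cases hx : x ∈ S
    · exact mul_nonneg (hfr0 x hx) (sq_nonneg _)
    · simp [hη x hx]
  calc c * ∫ x, f x ^ r * η x ^ 2 ∂μ
      ≤ (C * ∫ x in S, f x ∂μ) * ∫ x in S, f x ^ r ∂μ :=
        mul_le_mul hc (integral_mul_sq_le_setIntegral hS hfr hfr0 hη hη1) hnonneg
          (mul_nonneg hC (setIntegral_nonneg hS hf0))
    _ = C * ((∫ x in S, f x ∂μ) * ∫ x in S, f x ^ r ∂μ) := mul_assoc _ _ _
    _ ≤ C * (μ.real S * ∫ x in S, f x ^ (r + 1) ∂μ) := mul_le_mul_of_nonneg_left hcheb hC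

/-! ### The polynomial `L` and the pointwise inequality -/

lemma Lpoly_two_neg {p θ : ℝ} (hp : 1 < p) (hpθ : p ≤ θ) : Lpoly p θ 2 < 0 := by
  have hθ : 0 < θ + 1 := by linarith
  have heval : Lpoly p θ 2 =
      16 * ((θ + 1) ^ 2 - p * θ * (p + 1) * (2 * θ + 1 - p)) / (θ + 1) ^ 2 := by
    unfold Lpoly
    field_simp
    ring
  have hmul : (θ + 1) * (θ + 1) < p * θ * (p + 1) * (2 * θ + 1 - p) := by
    have hpθ1 : p < p * θ := by nlinarith
    have hlt : θ + 1 < p * θ * (p + 1) := by nlinarith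
    have hle : θ + 1 ≤ 2 * θ + 1 - p := by linarith
    exact mul_lt_mul hlt hle hθ (by nlinarith)
  rw [heval]
  exact div_neg_of_neg_of_pos (by linarith) (by positivity)

lemma Lpoly_neg_of_forall_eq {p θ s₀ t : ℝ} (hp : 1 < p) (hpθ : p ≤ θ)
    (huniq : ∀ s, 2 < s → Lpoly p θ s = 0 → s = s₀) (ht : 2 ≤ t) (hts : t < s₀) :
    Lpoly p θ t < 0 := by
  by_contra! hpos
  have hcont : Continuous (Lpoly p θ) := by unfold Lpoly; fun_prop
  obtain ⟨s, hs, hs0⟩ :=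
    intermediate_value_Icc ht hcont.continuousOn ⟨(Lpoly_two_neg hp hpθ).le, hpos⟩
  have hs2 : s ≠ 2 := by
    rintro rfl
    exact (Lpoly_two_neg hp hpθ).ne hs0
  have := huniq s (hs.1.lt_of_ne' hs2) hs0
  linarith [hs.2]

lemma caccioppoliConst_mul_caccioppoliConst_lt {p θ σ t : ℝ} (hσ0 : 0 < σ) (hσ1 : σ ≤ 1)
    (hσ : σ * (θ + 1) = p + 1) (ht : 1 < t) (hθ : 0 < θ + 1) (hL : Lpoly p θ t < 0) :
    caccioppoliConst (t / σ) * caccioppoliConst t < p * θ := by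
  have hfactor : Lpoly p θ t = t ^ 4 - p * θ * (16 * σ * (t - σ) * (t - 1)) := by
    have hσ' : σ = (p + 1) / (θ + 1) := by rw [← hσ]; field_simp
    rw [Lpoly, hσ']
    field_simp
    ring
  have htσ : 0 < t - σ := by linarith
  have ht1 : 0 < t - 1 := by linarith
  have hprod : caccioppoliConst (t / σ) * caccioppoliConst t =
      t ^ 4 / (16 * σ * (t - σ) * (t - 1)) := by
    have : t / σ - 1 = (t - σ) / σ := by field_simp
    rw [caccioppoliConst, caccioppoliConst, this]
    field_simp
    ring
  rw [hprod, div_lt_iff₀ (by positivity)]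
  linarith

/- With `ρ ^ b = √(C₁ / C₂)` the left-hand side is `√(C₁ C₂)` times
`(ρ v) ^ b * a ^ (1 - b) + a ^ b * (ρ v) ^ (1 - b)`, and the weighted AM-GM inequality applies. -/
lemma exists_add_mul_le_sqrt_mul_add {C₁ C₂ b : ℝ} (h₁ : 0 < C₁) (h₂ : 0 < C₂) (hb : 0 < b)
    (hb1 : b ≤ 1) : ∃ ρ, 0 < ρ ∧ ∀ a v : ℝ, 0 ≤ a → 0 ≤ v →
      C₁ * (v ^ b * a ^ (1 - b)) + ρ * (C₂ * (a ^ b * v ^ (1 - b))) ≤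
        √(C₁ * C₂) * (a + ρ * v) := by
  obtain ⟨ρ, hρ⟩ : ∃ ρ, ρ = √(C₁ / C₂) ^ b⁻¹ := ⟨_, rfl⟩
  have hρ0 : 0 < ρ := by rw [hρ]; positivity
  have hρb : ρ ^ b = √(C₁ / C₂) := by
    rw [hρ, ← rpow_mul (by positivity), inv_mul_cancel₀ hb.ne', rpow_one]
  have hC₁ : C₁ = √(C₁ * C₂) * ρ ^ b := by
    rw [hρb, ← sqrt_mul (by positivity), show C₁ * C₂ * (C₁ / C₂) = C₁ ^ 2 by field_simp,
      sqrt_sq h₁.le]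
  have hC₂ : √(C₁ * C₂) = C₂ * ρ ^ b := by
    rw [hρb, ← sqrt_sq h₂.le, ← sqrt_mul (by positivity), sqrt_sq h₂.le,
      show C₂ ^ 2 * (C₁ / C₂) = C₁ * C₂ by field_simp]
  refine ⟨ρ, hρ0, fun a v ha hv => ?_⟩
  have hρv : 0 ≤ ρ * v := by positivity
  have hAM := geom_mean_le_arith_mean2_weighted hb.le (sub_nonneg.2 hb1) hρv ha (by ring)
  have hAM' := geom_mean_le_arith_mean2_weighted hb.le (sub_nonneg.2 hb1) ha hρv (by ring)
  have hρ1 : ρ ^ b * ρ ^ (1 - b) = ρ := by rw [← rpow_add hρ0]; simp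
  calc C₁ * (v ^ b * a ^ (1 - b)) + ρ * (C₂ * (a ^ b * v ^ (1 - b)))
      = √(C₁ * C₂) * ((ρ * v) ^ b * a ^ (1 - b) + a ^ b * (ρ * v) ^ (1 - b)) := by
        rw [mul_rpow hρ0.le hv, mul_rpow hρ0.le hv]
        nth_rw 1 [hC₁]
        nth_rw 2 [← hρ1]
        rw [hC₂]
        ring
    _ ≤ √(C₁ * C₂) * (a + ρ * v) := by
        exact mul_le_mul_of_nonneg_left (by linarith) (sqrt_nonneg _)

lemma exists_rpow_add_le {θ m : ℝ} (hθ : 1 < θ) (hm : 1 < m) :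
    ∃ C, 0 ≤ C ∧ ∀ a b : ℝ, 0 ≤ a → 0 ≤ b → (a + b) ^ θ ≤ m * a ^ θ + C * b ^ θ := by
  obtain ⟨x, hx⟩ : ∃ x, x = m ^ (1 - θ)⁻¹ := ⟨_, rfl⟩
  have hx0 : 0 < x := by rw [hx]; positivity
  have hx1 : 0 < 1 - x := by
    rw [hx, sub_pos]
    exact rpow_lt_one_of_one_lt_of_neg hm (inv_lt_zero.2 (by linarith))
  have hxm : x ^ (1 - θ) = m := by
    rw [hx, ← rpow_mul (by positivity), inv_mul_cancel₀ (by linarith), rpow_one]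
  have hweight {w a : ℝ} (hw : 0 < w) (ha : 0 ≤ a) : w * (a / w) ^ θ = w ^ (1 - θ) * a ^ θ := by
    rw [div_rpow ha hw.le, rpow_sub hw, rpow_one]
    ring
  refine ⟨(1 - x) ^ (1 - θ), by positivity, fun a b ha hb => ?_⟩
  have hconv := (convexOn_rpow hθ.le).2 (x := a / x) (y := b / (1 - x)) (div_nonneg ha hx0.le)
    (div_nonneg hb hx1.le) hx0.le hx1.le (by ring)
  simpa only [smul_eq_mul, mul_div_cancel₀ _ hx0.ne', mul_div_cancel₀ _ hx1.ne', hweight hx0 ha,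
    hweight hx1 hb, hxm] using hconv

lemma exists_rpow_mul_rpow_add_le {C₁ C₂ p θ σ t : ℝ} (h₁ : 0 < C₁) (h₂ : 0 < C₂) (hp : 0 < p + 1)
    (hθ : 1 ≤ θ) (hσ0 : 0 < σ) (hσ : σ * (θ + 1) = p + 1) (hpt : p + 1 ≤ 2 * t) :
    ∃ ρ, 0 < ρ ∧ ∀ T V : ℝ, 0 ≤ T → 0 < V →
      C₁ * (V ^ p * T ^ (t / σ - 1)) + ρ * (C₂ * (T ^ θ * V ^ (t - 1))) ≤
        √(C₁ * C₂) * (V ^ ((p - 1) / 2) * T ^ ((θ - 1) / 2)) * (T ^ (t / σ) + ρ * V ^ t) := by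
  have ht : 0 < t := by linarith
  obtain ⟨b, hb⟩ : ∃ b, b = (p + 1) / (2 * t) := ⟨_, rfl⟩
  have htb : t * b = (p + 1) / 2 := by rw [hb]; field_simp
  have hτb : t / σ * b = (θ + 1) / 2 := by
    rw [div_mul_eq_mul_div, htb, ← hσ]
    field_simp
  have hb0 : 0 < b := by rw [hb]; positivity
  have hb1 : b ≤ 1 := by rw [hb]; exact (div_le_one (by linarith)).2 hpt
  have hτb' : 0 ≤ t / σ * (1 - b) := mul_nonneg (by positivity) (sub_nonneg.2 hb1)
  obtain ⟨ρ, hρ, hle⟩ := exists_add_mul_le_sqrt_mul_add h₁ h₂ hb0 hb1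
  refine ⟨ρ, hρ, fun T V hT hV => ?_⟩
  have hV₁ : V ^ p = V ^ ((p - 1) / 2) * (V ^ t) ^ b := by
    rw [← rpow_mul hV.le, ← rpow_add hV, htb]
    ring_nf
  have hV₂ : V ^ (t - 1) = V ^ ((p - 1) / 2) * (V ^ t) ^ (1 - b) := by
    rw [← rpow_mul hV.le, ← rpow_add hV, mul_sub, htb]
    ring_nf
  have hT₁ : T ^ θ = T ^ ((θ - 1) / 2) * (T ^ (t / σ)) ^ b := by
    rw [← rpow_mul hT, ← rpow_add_of_nonneg hT (by linarith) (by positivity), hτb]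
    ring_nf
  have hT₂ : T ^ (t / σ - 1) = T ^ ((θ - 1) / 2) * (T ^ (t / σ)) ^ (1 - b) := by
    rw [← rpow_mul hT, ← rpow_add_of_nonneg hT (by linarith) hτb', mul_sub, hτb]
    ring_nf
  rw [hV₁, hV₂, hT₁, hT₂]
  linarith [mul_le_mul_of_nonneg_left (hle (T ^ (t / σ)) (V ^ t) (by positivity) (by positivity))
    (by positivity : 0 ≤ V ^ ((p - 1) / 2) * T ^ ((θ - 1) / 2))]

lemma rpow_mul_rpow_sub_one_le {p θ σ t T V : ℝ} (hθ : 1 ≤ θ) (hσ : σ * (θ + 1) = p + 1)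
    (hT : 0 ≤ T) (hV : 0 < V) (hTV : T ≤ V ^ σ) :
    T ^ θ * V ^ (t - 1) ≤ V ^ ((p - 1) / 2) * T ^ ((θ - 1) / 2) * V ^ t := by
  have hT' : T ^ ((θ + 1) / 2) ≤ V ^ ((p + 1) / 2) := by
    calc T ^ ((θ + 1) / 2) ≤ (V ^ σ) ^ ((θ + 1) / 2) := by gcongr
      _ = V ^ ((p + 1) / 2) := by rw [← rpow_mul hV.le, ← hσ]; ring_nf
  have hTθ : T ^ θ = T ^ ((θ - 1) / 2) * T ^ ((θ + 1) / 2) := by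
    rw [← rpow_add_of_nonneg hT (by linarith) (by linarith)]
    ring_nf
  have hVt : V ^ ((p + 1) / 2) * V ^ (t - 1) = V ^ ((p - 1) / 2) * V ^ t := by
    rw [← rpow_add hV, ← rpow_add hV]
    ring_nf
  calc T ^ θ * V ^ (t - 1) = T ^ ((θ - 1) / 2) * (T ^ ((θ + 1) / 2) * V ^ (t - 1)) := by
        rw [hTθ, mul_assoc]
    _ ≤ T ^ ((θ - 1) / 2) * (V ^ ((p + 1) / 2) * V ^ (t - 1)) := by gcongr
    _ = V ^ ((p - 1) / 2) * T ^ ((θ - 1) / 2) * V ^ t := by rw [hVt]; ring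

/- If `2 * t < p + 1`, the comparison `T ≤ V ^ σ` alone closes the inequality and `T` needs no
weight. -/
lemma exists_coupled_interpolation {p θ σ t : ℝ} (hp : 1 < p) (hθ : 1 ≤ θ) (hσ0 : 0 < σ)
    (hσ1 : σ ≤ 1) (hσ : σ * (θ + 1) = p + 1) (ht : 2 ≤ t) (hL : Lpoly p θ t < 0) :
    ∃ α β A, 0 ≤ α ∧ 0 < β ∧ 0 < A ∧ A < √(σ * p * θ) ∧
      ∀ T V : ℝ, 0 ≤ T → 0 < V → T ≤ V ^ σ →
        α * (caccioppoliConst (t / σ) * (σ * V ^ p * T ^ (t / σ - 1))) +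
            β * (caccioppoliConst t * (T ^ θ * V ^ (t - 1))) ≤
          A * (V ^ ((p - 1) / 2) * T ^ ((θ - 1) / 2)) * (α * T ^ (t / σ) + β * V ^ t) := by
  have hc : 0 < caccioppoliConst t := caccioppoliConst_pos (by linarith)
  rcases le_or_gt (p + 1) (2 * t) with hpt | hpt
  · have hcσ : 0 < caccioppoliConst (t / σ) :=
      caccioppoliConst_pos ((one_lt_div hσ0).2 (by linarith))
    obtain ⟨ρ, hρ, hle⟩ := exists_rpow_mul_rpow_add_le (mul_pos hcσ hσ0) hc (by linarith) hθ hσ0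
      hσ hpt
    refine ⟨1, ρ, √(caccioppoliConst (t / σ) * σ * caccioppoliConst t), zero_le_one, hρ,
      by positivity, sqrt_lt_sqrt (by positivity) ?_, fun T V hT hV _ => ?_⟩
    · calc caccioppoliConst (t / σ) * σ * caccioppoliConst t
          = σ * (caccioppoliConst (t / σ) * caccioppoliConst t) := by ring
        _ < σ * (p * θ) := mul_lt_mul_of_pos_left (caccioppoliConst_mul_caccioppoliConst_lt
          hσ0 hσ1 hσ (by linarith) (by linarith) hL) hσ0
        _ = σ * p * θ := by ring
    · simpa only [one_mul, mul_assoc] using hle T V hT hV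
  · have hlt : caccioppoliConst t < √(σ * p * θ) := by
      refine lt_sqrt_of_sq_lt ?_
      have hle : caccioppoliConst t ≤ p / 2 := by
        rw [caccioppoliConst, div_le_iff₀ (by linarith)]
        nlinarith
      nlinarith
    refine ⟨0, 1, caccioppoliConst t, le_rfl, one_pos, hc, hlt, fun T V hT hV hTV => ?_⟩
    linarith [mul_le_mul_of_nonneg_left (rpow_mul_rpow_sub_one_le (t := t) hθ hσ hT hV hTV) hc.le]

/-- Constants for which the two Caccioppoli terms, weighted by `α` and `β`, are absorbed by a
fraction `ρ < 1` of the stability term, up to an error of lower order in `V`. Here `T` stands for a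
truncation of `U` with `U - 2 k ≤ T ≤ U`. -/
structure IsCoupledInterpolation (p θ σ t α β ρ K : ℝ) : Prop where
  fst_nonneg : 0 ≤ α
  snd_pos : 0 < β
  ratio_nonneg : 0 ≤ ρ
  ratio_lt_one : ρ < 1
  error_nonneg : 0 ≤ K
  add_le : ∀ ⦃k T U V : ℝ⦄, 0 ≤ k → 0 ≤ T → T ≤ U → U ≤ T + 2 * k → 0 < V → T ≤ V ^ σ →
    α * (caccioppoliConst (t / σ) * (σ * V ^ p * T ^ (t / σ - 1))) +
        β * (caccioppoliConst t * (U ^ θ * V ^ (t - 1))) ≤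
      ρ * (√(σ * p * θ) * (V ^ ((p - 1) / 2) * U ^ ((θ - 1) / 2)) *
        (α * T ^ (t / σ) + β * V ^ t)) + K * k ^ θ * V ^ (t - 1)

lemma exists_isCoupledInterpolation {p θ σ t : ℝ} (hp : 1 < p) (hθ : 1 < θ) (hσ0 : 0 < σ)
    (hσ1 : σ ≤ 1) (hσ : σ * (θ + 1) = p + 1) (ht : 2 ≤ t) (hL : Lpoly p θ t < 0) :
    ∃ α β ρ K, IsCoupledInterpolation p θ σ t α β ρ K := by
  obtain ⟨α, β, A, hα, hβ, hA, hAlt, hle⟩ :=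
    exists_coupled_interpolation hp hθ.le hσ0 hσ1 hσ ht hL
  obtain ⟨m, hm1, hm⟩ := exists_between ((one_lt_div hA).2 hAlt)
  rw [lt_div_iff₀ hA] at hm
  obtain ⟨C, hC, hadd⟩ := exists_rpow_add_le hθ hm1
  have hA₀ : 0 < √(σ * p * θ) := hA.trans hAlt
  have hc : 0 < caccioppoliConst t := caccioppoliConst_pos (by linarith)
  have hcσ : 0 < caccioppoliConst (t / σ) :=
    caccioppoliConst_pos ((one_lt_div hσ0).2 (by linarith))
  refine ⟨α, β, m * A / √(σ * p * θ), β * caccioppoliConst t * C * 2 ^ θ, hα, hβ,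
    by positivity, (div_lt_one hA₀).2 hm, by positivity, fun k T U V hk hT hTU hUT hV hTV => ?_⟩
  have hU : U ^ θ ≤ m * T ^ θ + C * (2 ^ θ * k ^ θ) := by
    rw [← mul_rpow two_pos.le hk]
    exact (rpow_le_rpow (hT.trans hTU) hUT (by linarith)).trans (hadd T _ hT (by positivity))
  have hTUθ : T ^ ((θ - 1) / 2) ≤ U ^ ((θ - 1) / 2) := rpow_le_rpow hT hTU (by linarith)
  have hfirst : 0 ≤ α * (caccioppoliConst (t / σ) * (σ * V ^ p * T ^ (t / σ - 1))) := by
    positivity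
  calc α * (caccioppoliConst (t / σ) * (σ * V ^ p * T ^ (t / σ - 1))) +
        β * (caccioppoliConst t * (U ^ θ * V ^ (t - 1)))
      ≤ m * (α * (caccioppoliConst (t / σ) * (σ * V ^ p * T ^ (t / σ - 1)))) +
          β * (caccioppoliConst t * ((m * T ^ θ + C * (2 ^ θ * k ^ θ)) * V ^ (t - 1))) := by
        refine add_le_add (le_mul_of_one_le_left hfirst hm1.le) ?_
        gcongr
    _ = m * (α * (caccioppoliConst (t / σ) * (σ * V ^ p * T ^ (t / σ - 1))) +
          β * (caccioppoliConst t * (T ^ θ * V ^ (t - 1)))) +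
          β * caccioppoliConst t * C * 2 ^ θ * k ^ θ * V ^ (t - 1) := by ring
    _ ≤ m * (A * (V ^ ((p - 1) / 2) * U ^ ((θ - 1) / 2)) * (α * T ^ (t / σ) + β * V ^ t)) +
          β * caccioppoliConst t * C * 2 ^ θ * k ^ θ * V ^ (t - 1) := by
        gcongr m * ?_ + _
        refine (hle T V hT hV hTV).trans ?_
        gcongr
    _ = _ := by field_simp

/-! ### Absorption for stable potentials -/

lemma IsStablePotential.integral_mul_rpow_mul_sq_le {N : ℕ} {Ω : Set (EuclideanSpace ℝ (Fin N))}
    {W w η : EuclideanSpace ℝ (Fin N) → ℝ} {t : ℝ} (hW : IsStablePotential Ω W) (hΩ : IsOpen Ω)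
    (hWc : ContinuousOn W Ω) (ht : 2 ≤ t) (hw : ContDiffOn ℝ 2 w Ω) (hw0 : ∀ x ∈ Ω, 0 ≤ w x)
    (hη : IsCutoff 2 Ω η) :
    ∫ x, W x * w x ^ t * η x ^ 2 ≤ ∫ x, ‖gradient (fun z => w z ^ (t / 2) * η z) x‖ ^ 2 := by
  have hcut : IsCutoff 1 Ω fun z => w z ^ (t / 2) * η z :=
    (hη.of_le one_le_two).mul_left hΩ
      ((hw.of_le one_le_two).rpow_const_of_le (m := 1) (by norm_num; linarith))
  refine le_trans (le_of_eq ?_) (hW.integral_mul_sq_le hΩ hWc hcut)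
  congr with x
  by_cases hx : x ∈ Ω
  · rw [mul_pow, ← rpow_mul_natCast (hw0 x hx), Nat.cast_ofNat, div_mul_cancel₀ _ two_ne_zero,
      mul_assoc]
  · simp [hη.eq_zero hx]

theorem IsStablePotential.sum_integral_norm_gradient_rpow_mul_sq_le {ι : Type*} [Fintype ι] {N : ℕ}
    {Ω : Set (EuclideanSpace ℝ (Fin N))} {W η h : EuclideanSpace ℝ (Fin N) → ℝ}
    {w g : ι → EuclideanSpace ℝ (Fin N) → ℝ} {t α : ι → ℝ} {ρ M : ℝ}
    (hW : IsStablePotential Ω W) (hΩ : IsOpen Ω) (hWc : ContinuousOn W Ω) (ht : ∀ i, 2 ≤ t i)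
    (hw : ∀ i, ContDiffOn ℝ 2 (w i) Ω) (hw0 : ∀ i, ∀ x ∈ Ω, 0 ≤ w i x)
    (hg : ∀ i, ContinuousOn (g i) Ω) (hgw : ∀ i, ∀ x ∈ Ω, -lap (w i) x ≤ g i x)
    (hη : IsCutoff 2 Ω η) (hM : ∀ x, ‖gradient η x‖ ^ 2 + |lap (fun z => η z ^ 2) x| ≤ M)
    (hα : ∀ i, 0 ≤ α i) (hρ : 0 ≤ ρ) (hh : ContinuousOn h Ω)
    (hle : ∀ x ∈ tsupport η, ∑ i, α i * (caccioppoliConst (t i) * (g i x * w i x ^ (t i - 1))) ≤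
      ρ * (W x * ∑ i, α i * w i x ^ t i) + h x) :
    (1 - ρ) * ∑ i, α i * ∫ x, ‖gradient (fun z => w i z ^ (t i / 2) * η z) x‖ ^ 2 ≤
      (∫ x, h x * η x ^ 2) + M * ∑ i, α i * ∫ x in tsupport η, w i x ^ t i := by
  have hη2 : IsCutoff 0 Ω fun x => η x ^ 2 := hη.sq.of_le zero_le
  have hpow (i) {r : ℝ} (hr : 0 ≤ r) : ContinuousOn (fun x => w i x ^ r) Ω :=
    (hw i).continuousOn.rpow_const fun _ _ => Or.inr hr
  have hpow₁ (i) := hpow i (r := t i - 1) (by linarith [ht i])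
  have hpow₂ (i) := hpow i (r := t i) (by linarith [ht i])
  have hcaccioppoli (i) := integral_norm_gradient_rpow_mul_sq_le hΩ (ht i) (hw i) (hw0 i) hη (hg i)
    (hgw i) hM
  have hstable (i) := hW.integral_mul_rpow_mul_sq_le hΩ hWc (ht i) (hw i) (hw0 i) hη
  have hlhs (i) : Integrable fun x =>
      α i * (caccioppoliConst (t i) * (g i x * w i x ^ (t i - 1))) * η x ^ 2 :=
    hη2.integrable_mul hΩ (.mul continuousOn_const (.mul continuousOn_const ((hg i).mul (hpow₁ i))))
  have hrhs (i) : Integrable fun x => ρ * α i * (W x * w i x ^ t i * η x ^ 2) :=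
    (hη2.integrable_mul hΩ (hWc.mul (hpow₂ i))).const_mul _
  have hpointwise : ∑ i, α i * (caccioppoliConst (t i) *
        ∫ x, g i x * (w i x ^ (t i - 1) * η x ^ 2)) ≤
      (ρ * ∑ i, α i * ∫ x, W x * w i x ^ t i * η x ^ 2) + ∫ x, h x * η x ^ 2 := by
    have hmono : ∫ x, ∑ i, α i * (caccioppoliConst (t i) * (g i x * w i x ^ (t i - 1))) * η x ^ 2 ≤
        ∫ x, (∑ i, ρ * α i * (W x * w i x ^ t i * η x ^ 2)) + h x * η x ^ 2 := by
      refine integral_mono (integrable_finsetSum _ fun i _ => hlhs i)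
        ((integrable_finsetSum _ fun i _ => hrhs i).add (hη2.integrable_mul hΩ hh)) fun x => ?_
      by_cases hx : x ∈ tsupport η
      · have := mul_le_mul_of_nonneg_right (hle x hx) (sq_nonneg (η x))
        simp only [Finset.mul_sum, Finset.sum_mul, add_mul] at this
        refine this.trans_eq (congrArg (· + _) (Finset.sum_congr rfl fun i _ => by ring))
      · simp [image_eq_zero_of_notMem_tsupport hx]
    rw [integral_add (integrable_finsetSum _ fun i _ => hrhs i) (hη2.integrable_mul hΩ hh),
      integral_finsetSum _ fun i _ => hlhs i, integral_finsetSum _ fun i _ => hrhs i] at hmono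
    simpa only [mul_assoc, integral_const_mul, Finset.mul_sum] using hmono
  have hsum := Finset.sum_le_sum fun i (_ : i ∈ Finset.univ) =>
    mul_le_mul_of_nonneg_left (hcaccioppoli i) (hα i)
  have hsum' := mul_le_mul_of_nonneg_left (Finset.sum_le_sum fun i (_ : i ∈ Finset.univ) =>
    mul_le_mul_of_nonneg_left (hstable i) (hα i)) hρ
  simp only [mul_add, Finset.sum_add_distrib, mul_left_comm _ M, ← Finset.mul_sum] at hsum
  linarith

/-! ### Comparison of the two components -/

lemma exists_isCutoff_eq_one {E : Type*} [NormedAddCommGroup E] [NormedSpace ℝ E]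
    [FiniteDimensional ℝ E] [HasContDiffBump E] (c : E) {a b : ℝ} (ha : 0 < a) (hab : a < b) :
    ∃ η : E → ℝ, IsCutoff (⊤ : ℕ∞) (ball c b) η ∧ (∀ x, 0 ≤ η x) ∧ (∀ x, η x ≤ 1) ∧
      ∀ x ∈ closedBall c a, η x = 1 := by
  let η : ContDiffBump c := ⟨a, (a + b) / 2, ha, by linarith⟩
  have hsub : tsupport η ⊆ ball c b :=
    η.tsupport_eq.subset.trans (closedBall_subset_ball (show (a + b) / 2 < b by linarith))
  exact ⟨η, ⟨η.contDiff, η.hasCompactSupport, hsub⟩, fun _ => η.nonneg, fun _ => η.le_one,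
    fun _ => η.one_of_mem_closedBall⟩

lemma exists_setIntegral_neg_lap_le {N : ℕ} (c : EuclideanSpace ℝ (Fin N)) {a b : ℝ} (ha : 0 < a)
    (hab : a < b) :
    ∃ M, 0 ≤ M ∧ ∀ Ω, IsOpen Ω → closedBall c b ⊆ Ω → ∀ w : EuclideanSpace ℝ (Fin N) → ℝ,
      ContDiffOn ℝ 2 w Ω → (∀ x ∈ Ω, 0 ≤ w x) → (∀ x ∈ Ω, 0 ≤ -lap w x) →
      ∫ x in ball c a, -lap w x ≤ M * ∫ x in ball c b, w x := by
  obtain ⟨η, hηsmooth, hη0, -, hη1⟩ := exists_isCutoff_eq_one c ha hab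
  have hη : IsCutoff 2 (ball c b) η := hηsmooth.of_le ENat.LEInfty.out
  obtain ⟨M, hM⟩ :=
    hη.laplacian.hasCompactSupport.exists_bound_of_continuous hη.laplacian.contDiff.continuous
  refine ⟨M, (norm_nonneg _).trans (hM c), fun Ω hΩ hB w hw hw0 hlap => ?_⟩
  have hηΩ : IsCutoff 2 Ω η := hη.mono (ball_subset_closedBall.trans hB)
  have hw1 : ContDiffOn ℝ 1 w Ω := hw.of_le one_le_two
  have hwint : IntegrableOn w (ball c b) :=
    ((hw.continuousOn.mono hB).integrableOn_compact (isCompact_closedBall c b)).mono_set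
      ball_subset_closedBall
  calc ∫ x in ball c a, -lap w x = ∫ x in ball c a, -lap w x * η x :=
        setIntegral_congr_fun measurableSet_ball fun x hx => by
          simp only [hη1 x (ball_subset_closedBall hx), mul_one]
    _ ≤ ∫ x, -lap w x * η x := by
        refine setIntegral_le_integral ((hηΩ.of_le zero_le).integrable_mul hΩ
          (continuousOn_lap hΩ hw).neg) (.of_forall fun x => ?_)
        by_cases hx : x ∈ Ω
        · exact mul_nonneg (hlap x hx) (hη0 x)
        · simp [hηΩ.eq_zero hx]
    _ = ∫ x, w x * -lap η x := by
        rw [← integral_inner_gradient_eq_integral_neg_lap_mul hΩ hw (hηΩ.of_le one_le_two),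
          integral_inner_gradient_eq_integral_mul_neg_lap hΩ hw1 hηΩ]
    _ = ∫ x in ball c b, w x * -lap η x :=
        (setIntegral_eq_integral_of_forall_compl_eq_zero fun x hx => by
          rw [hη.laplacian.eq_zero hx, neg_zero, mul_zero]).symm
    _ ≤ ∫ x in ball c b, M * w x := by
        refine setIntegral_mono_on ?_ (hwint.const_mul M) measurableSet_ball fun x hx => ?_
        · simp only [mul_neg]
          exact (hηΩ.laplacian.integrable_mul hΩ hw.continuousOn).neg.integrableOn
        · rw [mul_comm M]
          exact mul_le_mul_of_nonneg_left ((neg_le_abs _).trans (hM x))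
            (hw0 x (hB (ball_subset_closedBall hx)))
    _ = M * ∫ x in ball c b, w x := integral_const_mul _ _

/-- Positive `C²` solutions of `-ΔU = σ V^p`, `-ΔV = U^θ`. Rescaling brings the system of the
theorem to this form with `σ = (p + 1) / (θ + 1)`, the value for which `U ≤ V ^ σ` is the natural
comparison between the components. -/
structure IsNormalizedSolution {N : ℕ} (Ω : Set (EuclideanSpace ℝ (Fin N))) (σ p θ : ℝ)
    (U V : EuclideanSpace ℝ (Fin N) → ℝ) : Prop where
  contDiffOn_fst : ContDiffOn ℝ 2 U Ω
  contDiffOn_snd : ContDiffOn ℝ 2 V Ω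
  fst_pos : ∀ x ∈ Ω, 0 < U x
  snd_pos : ∀ x ∈ Ω, 0 < V x
  neg_lap_fst : ∀ x ∈ Ω, -lap U x = σ * V x ^ p
  neg_lap_snd : ∀ x ∈ Ω, -lap V x = U x ^ θ

section

variable {N : ℕ} {Ω : Set (EuclideanSpace ℝ (Fin N))} {U V : EuclideanSpace ℝ (Fin N) → ℝ}
  {σ p θ : ℝ}

lemma lap_rpow_le (hΩ : IsOpen Ω) (hV : ContDiffOn ℝ 2 V Ω) (hV0 : ∀ x ∈ Ω, 0 < V x)
    (hσ0 : 0 ≤ σ) (hσ1 : σ ≤ 1) {x : EuclideanSpace ℝ (Fin N)} (hx : x ∈ Ω) :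
    lap (fun z => V z ^ σ) x ≤ σ * V x ^ (σ - 1) * lap V x := by
  rw [lap_comp hΩ hV (h := fun t => t ^ σ) (h' := fun t => σ * t ^ (σ - 1))
    (fun y hy => hasDerivAt_rpow_const (Or.inl (hV0 y hy).ne'))
    ((hasDerivAt_rpow_const (Or.inl (hV0 x hx).ne')).const_mul σ) hx]
  have hconcave : σ * ((σ - 1) * V x ^ (σ - 1 - 1)) ≤ 0 :=
    mul_nonpos_of_nonneg_of_nonpos hσ0
      (mul_nonpos_of_nonpos_of_nonneg (by linarith) (rpow_nonneg (hV0 x hx).le _))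
  linarith [mul_nonpos_of_nonpos_of_nonneg hconcave (sq_nonneg ‖gradient V x‖)]

namespace IsNormalizedSolution

lemma lap_sub_rpow_nonneg (h : IsNormalizedSolution Ω σ p θ U V) (hΩ : IsOpen Ω) (hσ0 : 0 ≤ σ)
    (hσ1 : σ ≤ 1) (hθ : 0 ≤ θ) (hσ : σ * (θ + 1) = p + 1) {x : EuclideanSpace ℝ (Fin N)}
    (hx : x ∈ Ω) (hVU : V x ^ σ ≤ U x) : 0 ≤ lap (fun z => U z - V z ^ σ) x := by
  have hVx := h.snd_pos x hx
  have hVσ : ContDiffOn ℝ 2 (fun z => V z ^ σ) Ω :=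
    h.contDiffOn_snd.rpow_const_of_ne fun z hz => (h.snd_pos z hz).ne'
  have hVp : V x ^ p = V x ^ (σ - 1) * (V x ^ σ) ^ θ := by
    rw [← rpow_mul hVx.le, ← rpow_add hVx]
    congr 1
    linarith
  rw [lap_sub hΩ h.contDiffOn_fst hVσ hx, sub_nonneg]
  calc lap (fun z => V z ^ σ) x ≤ σ * V x ^ (σ - 1) * lap V x :=
        lap_rpow_le hΩ h.contDiffOn_snd h.snd_pos hσ0 hσ1 hx
    _ = -(σ * V x ^ (σ - 1) * U x ^ θ) := by rw [← h.neg_lap_snd x hx]; ring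
    _ ≤ -(σ * V x ^ (σ - 1) * (V x ^ σ) ^ θ) := by gcongr
    _ = lap U x := by rw [mul_assoc, ← hVp, ← h.neg_lap_fst x hx, neg_neg]

lemma lap_smoothPosPart_sub_rpow_nonneg (h : IsNormalizedSolution Ω σ p θ U V) (hΩ : IsOpen Ω)
    (hσ0 : 0 ≤ σ) (hσ1 : σ ≤ 1) (hθ : 0 ≤ θ) (hσ : σ * (θ + 1) = p + 1) {δ : ℝ} (hδ : 0 < δ)
    {x : EuclideanSpace ℝ (Fin N)} (hx : x ∈ Ω) :
    0 ≤ lap (fun z => smoothPosPart δ (U z - V z ^ σ)) x := by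
  have hw : ContDiffOn ℝ 2 (fun z => U z - V z ^ σ) Ω :=
    h.contDiffOn_fst.sub (h.contDiffOn_snd.rpow_const_of_ne fun z hz => (h.snd_pos z hz).ne')
  refine le_trans ?_ (smoothTransition_mul_lap_le hΩ hw hδ hx)
  rcases le_total (U x) (V x ^ σ) with hUV | hVU
  · rw [smoothTransition.zero_of_nonpos
      (div_nonpos_of_nonpos_of_nonneg (sub_nonpos.2 hUV) hδ.le), zero_mul]
  · exact mul_nonneg (smoothTransition.nonneg _)
      (h.lap_sub_rpow_nonneg hΩ hσ0 hσ1 hθ hσ hx hVU)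

lemma sub_rpow_le_mul_setIntegral_ball (h : IsNormalizedSolution Ω σ p θ U V) (hΩ : IsOpen Ω)
    (hσ0 : 0 ≤ σ) (hσ1 : σ ≤ 1) (hθ : 0 ≤ θ) (hσ : σ * (θ + 1) = p + 1)
    {x : EuclideanSpace ℝ (Fin N)} {r R : ℝ} (hr : 0 < r) (hrR : r < R)
    (hB : closedBall x R ⊆ Ω) :
    U x - V x ^ σ ≤
      (r ^ N * ∫ z : EuclideanSpace ℝ (Fin N), meanValueKernel z)⁻¹ * ∫ z in ball x r, U z := by
  have hw : ContDiffOn ℝ 2 (fun z => U z - V z ^ σ) Ω :=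
    h.contDiffOn_fst.sub (h.contDiffOn_snd.rpow_const_of_ne fun z hz => (h.snd_pos z hz).ne')
  have hball : ball x r ⊆ closedBall x R := ball_subset_closedBall.trans
    (closedBall_subset_closedBall hrR.le)
  have hint {f : EuclideanSpace ℝ (Fin N) → ℝ} (hf : ContDiffOn ℝ 2 f Ω) :
      IntegrableOn f (ball x r) :=
    ((hf.continuousOn.mono hB).integrableOn_compact (isCompact_closedBall x R)).mono_set hball
  have hkernel := integral_meanValueKernel_pos (volume : Measure (EuclideanSpace ℝ (Fin N)))
  refine le_of_forall_pos_le_add fun δ hδ => ?_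
  have hsmooth : ContDiffOn ℝ 2 (fun z => smoothPosPart δ (U z - V z ^ σ)) Ω :=
    (contDiff_smoothPosPart δ).comp_contDiffOn hw
  have hmono : ∫ z in ball x r, smoothPosPart δ (U z - V z ^ σ) ≤ ∫ z in ball x r, U z := by
    refine setIntegral_mono_on (hint hsmooth) (hint h.contDiffOn_fst) measurableSet_ball
      fun z hz => (smoothPosPart_le hδ _).trans ?_
    have hz := hB (hball hz)
    exact max_le (sub_le_self _ (rpow_nonneg (h.snd_pos z hz).le σ)) (h.fst_pos z hz).le
  rw [← sub_le_iff_le_add]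
  calc U x - V x ^ σ - δ ≤ smoothPosPart δ (U x - V x ^ σ) := sub_le_smoothPosPart hδ _
    _ ≤ _ := le_inv_mul_setIntegral_ball_of_lap_nonneg hΩ hsmooth
        (fun z => h.lap_smoothPosPart_sub_rpow_nonneg hΩ hσ0 hσ1 hθ hσ hδ)
        (fun z _ => smoothPosPart_nonneg hδ _) hB hr hrR
    _ ≤ _ := by gcongr

end IsNormalizedSolution

end

lemma exists_rpow_setIntegral_fst_le {N : ℕ} (c : EuclideanSpace ℝ (Fin N)) {a b σ p θ : ℝ}
    (ha : 0 < a) (hab : a < b) (hθ : 1 ≤ θ) :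
    ∃ C, 0 ≤ C ∧ ∀ Ω, IsOpen Ω → closedBall c b ⊆ Ω → ∀ U V : EuclideanSpace ℝ (Fin N) → ℝ,
      IsNormalizedSolution Ω σ p θ U V →
        (∫ x in ball c a, U x) ^ θ ≤ C * ∫ x in ball c b, V x := by
  obtain ⟨M, hM0, hM⟩ := exists_setIntegral_neg_lap_le c ha hab
  refine ⟨volume.real (ball c a) ^ (θ - 1) * M, by positivity, fun Ω hΩ hB U V h => ?_⟩
  have hBΩ : ball c a ⊆ Ω := (ball_subset_ball hab.le).trans (ball_subset_closedBall.trans hB)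
  have hint {f : EuclideanSpace ℝ (Fin N) → ℝ} (hf : ContinuousOn f Ω) :
      IntegrableOn f (ball c a) :=
    ((hf.mono hB).integrableOn_compact (isCompact_closedBall c b)).mono_set
      ((ball_subset_ball hab.le).trans ball_subset_closedBall)
  have hfinite : IsFiniteMeasure (volume.restrict (ball c a)) :=
    isFiniteMeasure_restrict.2 measure_ball_lt_top.ne
  have hUθ : ∫ x in ball c a, U x ^ θ ≤ M * ∫ x in ball c b, V x := by
    rw [← setIntegral_congr_fun measurableSet_ball fun x hx => h.neg_lap_snd x (hBΩ hx)]
    refine hM Ω hΩ hB V h.contDiffOn_snd (fun x hx => (h.snd_pos x hx).le) fun x hx => ?_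
    rw [h.neg_lap_snd x hx]
    exact rpow_nonneg (h.fst_pos x hx).le θ
  have hjensen := rpow_integral_le_mul_integral_rpow hθ
    (ae_restrict_of_forall_mem measurableSet_ball fun x hx => (h.fst_pos x (hBΩ hx)).le)
    (hint h.contDiffOn_fst.continuousOn)
    (hint (h.contDiffOn_fst.continuousOn.rpow_const fun _ _ => Or.inr (by linarith)))
  rw [measureReal_restrict_apply_univ] at hjensen
  rw [mul_assoc]
  exact hjensen.trans (by gcongr)

/- `k` is the mean value bound for `U - V ^ σ`; its power `k ^ θ` is controlled by `∫ U ^ θ`,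
that is by the mass of `-ΔV`. -/
lemma exists_const_forall_exists_le_rpow_add (N : ℕ) {σ p θ : ℝ} (hσ0 : 0 ≤ σ) (hσ1 : σ ≤ 1)
    (hθ : 1 ≤ θ) (hσ : σ * (θ + 1) = p + 1) :
    ∃ C, 0 ≤ C ∧ ∀ Ω, IsOpen Ω → closedBall 0 1 ⊆ Ω → ∀ U V : EuclideanSpace ℝ (Fin N) → ℝ,
      IsNormalizedSolution Ω σ p θ U V → ∃ k, 0 < k ∧
        (∀ x ∈ ball 0 (1 / 2), U x ≤ V x ^ σ + k) ∧ k ^ θ ≤ C * ∫ x in ball 0 1, V x := by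
  let B : Set (EuclideanSpace ℝ (Fin N)) := ball 0 (3 / 4)
  obtain ⟨C, hC0, hC⟩ := exists_rpow_setIntegral_fst_le (0 : EuclideanSpace ℝ (Fin N))
    (a := 3 / 4) (b := 1) (σ := σ) (p := p) (by norm_num) (by norm_num) hθ
  let K : ℝ := ((1 / 4) ^ N * ∫ z : EuclideanSpace ℝ (Fin N), meanValueKernel z)⁻¹
  have hK : 0 < K := by
    have := integral_meanValueKernel_pos (volume : Measure (EuclideanSpace ℝ (Fin N)))
    positivity
  refine ⟨K ^ θ * C, by positivity, fun Ω hΩ hΩ1 U V h => ?_⟩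
  have hB1 : B ⊆ closedBall 0 1 :=
    ball_subset_closedBall.trans (closedBall_subset_closedBall (by norm_num))
  have hU0 : 0 ≤ᵐ[volume.restrict B] U :=
    ae_restrict_of_forall_mem measurableSet_ball fun x hx => (h.fst_pos x (hΩ1 (hB1 hx))).le
  have hUint : IntegrableOn U B :=
    ((h.contDiffOn_fst.continuousOn.mono hΩ1).integrableOn_compact
      (isCompact_closedBall 0 1)).mono_set hB1
  have hUpos : 0 < ∫ x in B, U x := by
    have hBsupp : B ⊆ Function.support U := fun x hx => (h.fst_pos x (hΩ1 (hB1 hx))).ne'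
    rw [setIntegral_pos_iff_support_of_nonneg_ae hU0 hUint, inter_eq_right.2 hBsupp]
    exact measure_ball_pos _ _ (by norm_num)
  refine ⟨K * ∫ x in B, U x, by positivity, fun x hx => ?_, ?_⟩
  · have hx := mem_ball_zero_iff.1 hx
    have hsub : ball x (1 / 4) ⊆ B := ball_subset_ball' (by rw [dist_zero_right]; linarith)
    have hsub' : closedBall x (1 / 2) ⊆ Ω :=
      (closedBall_subset_closedBall' (by rw [dist_zero_right]; linarith)).trans hΩ1
    rw [← sub_le_iff_le_add']
    refine (h.sub_rpow_le_mul_setIntegral_ball hΩ hσ0 hσ1 (by linarith) hσ (by norm_num)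
      (by norm_num) hsub').trans (mul_le_mul_of_nonneg_left ?_ hK.le)
    exact setIntegral_mono_set hUint hU0 hsub.eventuallyLE
  · rw [mul_rpow hK.le hUpos.le, mul_assoc]
    exact mul_le_mul_of_nonneg_left (hC Ω hΩ hΩ1 U V h) (by positivity)

/-! ### The local estimate on the unit ball -/

lemma smoothPosPart_sub_le {k a b : ℝ} (hk : 0 < k) (hb : 0 ≤ b) (hab : a ≤ b + k) :
    smoothPosPart k (a - k) ≤ b :=
  (smoothPosPart_le hk _).trans (max_le (sub_le_iff_le_add.2 hab) hb)

namespace IsNormalizedSolution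

variable {N : ℕ} {Ω : Set (EuclideanSpace ℝ (Fin N))} {U V : EuclideanSpace ℝ (Fin N) → ℝ}
  {σ p θ k : ℝ}

lemma continuousOn_fst_rpow (h : IsNormalizedSolution Ω σ p θ U V) (r : ℝ) :
    ContinuousOn (fun x => U x ^ r) Ω :=
  h.contDiffOn_fst.continuousOn.rpow_const fun x hx => Or.inl (h.fst_pos x hx).ne'

lemma continuousOn_snd_rpow (h : IsNormalizedSolution Ω σ p θ U V) (r : ℝ) :
    ContinuousOn (fun x => V x ^ r) Ω :=
  h.contDiffOn_snd.continuousOn.rpow_const fun x hx => Or.inl (h.snd_pos x hx).ne'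

lemma neg_lap_smoothPosPart_sub_le (h : IsNormalizedSolution Ω σ p θ U V) (hΩ : IsOpen Ω)
    (hσ0 : 0 ≤ σ) (hk : 0 < k) {x : EuclideanSpace ℝ (Fin N)} (hx : x ∈ Ω) :
    -lap (fun z => smoothPosPart k (U z - k)) x ≤ σ * V x ^ p := by
  have hsuper : 0 ≤ σ * V x ^ p := mul_nonneg hσ0 (rpow_nonneg (h.snd_pos x hx).le p)
  have hlap := smoothTransition_mul_lap_le (w := fun z => U z + -k) hΩ
    (h.contDiffOn_fst.add contDiffOn_const) hk hx
  rw [lap_add_const] at hlap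
  have hle : smoothTransition ((U x + -k) / k) * (σ * V x ^ p) ≤ σ * V x ^ p :=
    mul_le_of_le_one_left hsuper (smoothTransition.le_one _)
  simp only [sub_eq_add_neg]
  rw [← h.neg_lap_fst x hx] at hle ⊢
  linarith

lemma setIntegral_smoothPosPart_sub_rpow_le (h : IsNormalizedSolution Ω σ p θ U V)
    (hσ0 : 0 < σ) (hk : 0 < k) {S : Set (EuclideanSpace ℝ (Fin N))} (hS : IsCompact S)
    (hSΩ : S ⊆ Ω) (hUV : ∀ x ∈ S, U x ≤ V x ^ σ + k) {t : ℝ} (ht : 0 ≤ t) :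
    ∫ x in S, smoothPosPart k (U x - k) ^ (t / σ) ≤ ∫ x in S, V x ^ t := by
  have hT : ContinuousOn (fun x => smoothPosPart k (U x - k)) Ω :=
    (contDiff_smoothPosPart k).continuous.comp_continuousOn
      (h.contDiffOn_fst.continuousOn.sub continuousOn_const)
  have hτ : 0 ≤ t / σ := by positivity
  refine setIntegral_mono_on (((hT.rpow_const fun _ _ => Or.inr hτ).mono hSΩ).integrableOn_compact
    hS) (((h.continuousOn_snd_rpow t).mono hSΩ).integrableOn_compact hS) hS.measurableSet
    fun x hx => ?_
  have hV := (h.snd_pos x (hSΩ hx)).le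
  calc smoothPosPart k (U x - k) ^ (t / σ) ≤ (V x ^ σ) ^ (t / σ) :=
        rpow_le_rpow (smoothPosPart_nonneg hk _)
          (smoothPosPart_sub_le hk (rpow_nonneg hV σ) (hUV x hx)) hτ
    _ = V x ^ t := by rw [← rpow_mul hV, mul_div_cancel₀ _ hσ0.ne']

end IsNormalizedSolution

section

variable {N : ℕ} {Ω : Set (EuclideanSpace ℝ (Fin N))} {U V η : EuclideanSpace ℝ (Fin N) → ℝ}
  {p θ σ t α β ρ K k M : ℝ}

/- The Caccioppoli inequalities for `V ^ (t / 2)` and for the power `t / (2 σ)` of `(U - k)₊`,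
which has the same growth by `U ≤ V ^ σ + k`, are added and absorbed into the stability
inequality. -/
lemma IsCoupledInterpolation.add_integral_norm_gradient_rpow_mul_sq_le
    (hc : IsCoupledInterpolation p θ σ t α β ρ K) (h : IsNormalizedSolution Ω σ p θ U V)
    (hW : IsStablePotential Ω
      fun x => √(σ * p * θ) * (V x ^ ((p - 1) / 2) * U x ^ ((θ - 1) / 2)))
    (hΩ : IsOpen Ω) (hσ0 : 0 < σ) (hσ1 : σ ≤ 1) (ht : 2 ≤ t) (hη : IsCutoff 2 Ω η)
    (hηM : ∀ x, ‖gradient η x‖ ^ 2 + |lap (fun z => η z ^ 2) x| ≤ M) (hk : 0 < k)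
    (hUV : ∀ x ∈ tsupport η, U x ≤ V x ^ σ + k) :
    (1 - ρ) * (α * (∫ x,
          ‖gradient (fun z => smoothPosPart k (U z - k) ^ (t / σ / 2) * η z) x‖ ^ 2) +
        β * ∫ x, ‖gradient (fun z => V z ^ (t / 2) * η z) x‖ ^ 2) ≤
      K * k ^ θ * (∫ x, V x ^ (t - 1) * η x ^ 2) +
        M * (α * (∫ x in tsupport η, smoothPosPart k (U x - k) ^ (t / σ)) +
          β * ∫ x in tsupport η, V x ^ t) := by
  have hηΩ := hη.tsupport_subset
  have habsorb := hW.sum_integral_norm_gradient_rpow_mul_sq_le (t := ![t / σ, t]) (α := ![α, β])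
    (w := ![fun x => smoothPosPart k (U x - k), V])
    (g := ![fun x => σ * V x ^ p, fun x => U x ^ θ]) (h := fun x => K * k ^ θ * V x ^ (t - 1)) hΩ
    (continuousOn_const.mul ((h.continuousOn_snd_rpow _).mul (h.continuousOn_fst_rpow _)))
    (Fin.forall_fin_two.2 ⟨ht.trans (le_div_self (by linarith) hσ0 hσ1), ht⟩)
    (Fin.forall_fin_two.2 ⟨(contDiff_smoothPosPart k).comp_contDiffOn
      (h.contDiffOn_fst.sub contDiffOn_const), h.contDiffOn_snd⟩)
    (Fin.forall_fin_two.2 ⟨fun x _ => smoothPosPart_nonneg hk _, fun x hx => (h.snd_pos x hx).le⟩)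
    (Fin.forall_fin_two.2
      ⟨continuousOn_const.mul (h.continuousOn_snd_rpow p), h.continuousOn_fst_rpow θ⟩)
    (Fin.forall_fin_two.2 ⟨fun x => h.neg_lap_smoothPosPart_sub_le hΩ hσ0.le hk,
      fun x hx => (h.neg_lap_snd x hx).le⟩)
    hη hηM (Fin.forall_fin_two.2 ⟨hc.fst_nonneg, hc.snd_pos.le⟩) hc.ratio_nonneg
    (continuousOn_const.mul (h.continuousOn_snd_rpow _)) fun x hx => by
      have hU := h.fst_pos x (hηΩ hx)
      have hV := h.snd_pos x (hηΩ hx)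
      rw [Fin.sum_univ_two, Fin.sum_univ_two]
      exact hc.add_le (T := smoothPosPart k (U x - k)) hk.le (smoothPosPart_nonneg hk _)
        (smoothPosPart_sub_le hk hU.le (by linarith))
        (by linarith [sub_le_smoothPosPart hk (U x - k)]) hV
        (smoothPosPart_sub_le hk (rpow_nonneg hV.le σ) (hUV x hx))
  rw [Fin.sum_univ_two, Fin.sum_univ_two] at habsorb
  simp only [mul_assoc, integral_const_mul] at habsorb ⊢
  exact habsorb

lemma IsCoupledInterpolation.integral_norm_gradient_rpow_mul_sq_le
    (hc : IsCoupledInterpolation p θ σ t α β ρ K) (h : IsNormalizedSolution Ω σ p θ U V)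
    (hW : IsStablePotential Ω
      fun x => √(σ * p * θ) * (V x ^ ((p - 1) / 2) * U x ^ ((θ - 1) / 2)))
    (hΩ : IsOpen Ω) (hσ0 : 0 < σ) (hσ1 : σ ≤ 1) (ht : 2 ≤ t) (hη : IsCutoff 2 Ω η)
    (hM : 0 ≤ M) (hηM : ∀ x, ‖gradient η x‖ ^ 2 + |lap (fun z => η z ^ 2) x| ≤ M) (hk : 0 < k)
    (hUV : ∀ x ∈ tsupport η, U x ≤ V x ^ σ + k) :
    (1 - ρ) * β * ∫ x, ‖gradient (fun z => V z ^ (t / 2) * η z) x‖ ^ 2 ≤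
      K * k ^ θ * (∫ x, V x ^ (t - 1) * η x ^ 2) + M * (α + β) * ∫ x in tsupport η, V x ^ t := by
  have hρ : 0 ≤ 1 - ρ := sub_nonneg.2 hc.ratio_lt_one.le
  have hα := hc.fst_nonneg
  have hfst : 0 ≤ (1 - ρ) * (α * ∫ x,
      ‖gradient (fun z => smoothPosPart k (U z - k) ^ (t / σ / 2) * η z) x‖ ^ 2) := by
    positivity
  have hT := mul_le_mul_of_nonneg_left (h.setIntegral_smoothPosPart_sub_rpow_le hσ0 hk
    hη.hasCompactSupport hη.tsupport_subset hUV (by linarith : 0 ≤ t)) (mul_nonneg hM hα)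
  linarith [hc.add_integral_norm_gradient_rpow_mul_sq_le h hW hΩ hσ0 hσ1 ht hη hηM hk hUV]

lemma IsCoupledInterpolation.integral_norm_gradient_rpow_mul_sq_le_mul_setIntegral
    (hc : IsCoupledInterpolation p θ σ t α β ρ K) (h : IsNormalizedSolution Ω σ p θ U V)
    (hW : IsStablePotential Ω
      fun x => √(σ * p * θ) * (V x ^ ((p - 1) / 2) * U x ^ ((θ - 1) / 2)))
    (hΩ : IsOpen Ω) (hσ0 : 0 < σ) (hσ1 : σ ≤ 1) (ht : 2 ≤ t) {c : EuclideanSpace ℝ (Fin N)}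
    {r C : ℝ} (hB : closedBall c r ⊆ Ω) (hη : IsCutoff 2 (ball c r) η)
    (hη1 : ∀ x, η x ^ 2 ≤ 1) (hM : 0 ≤ M)
    (hηM : ∀ x, ‖gradient η x‖ ^ 2 + |lap (fun z => η z ^ 2) x| ≤ M) (hk : 0 < k)
    (hUV : ∀ x ∈ tsupport η, U x ≤ V x ^ σ + k) (hC : 0 ≤ C)
    (hkC : k ^ θ ≤ C * ∫ x in ball c r, V x) :
    (1 - ρ) * β * ∫ x, ‖gradient (fun z => V z ^ (t / 2) * η z) x‖ ^ 2 ≤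
      (K * (C * volume.real (ball c r)) + M * (α + β)) * ∫ x in ball c r, V x ^ t := by
  have hV0 (x) (hx : x ∈ ball c r) : 0 ≤ V x := (h.snd_pos x (hB (ball_subset_closedBall hx))).le
  have hVint {f : EuclideanSpace ℝ (Fin N) → ℝ} (hf : ContinuousOn f Ω) :
      IntegrableOn f (ball c r) :=
    ((hf.mono hB).integrableOn_compact (isCompact_closedBall c r)).mono_set ball_subset_closedBall
  have hlower : k ^ θ * ∫ x, V x ^ (t - 1) * η x ^ 2 ≤
      C * (volume.real (ball c r) * ∫ x in ball c r, V x ^ t) := by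
    simpa only [sub_add_cancel] using mul_integral_rpow_mul_sq_le (r := t - 1) measurableSet_ball
      measure_ball_lt_top.ne (by linarith) hV0 (hVint h.contDiffOn_snd.continuousOn)
      (hVint (h.continuousOn_snd_rpow _)) (hVint (h.continuousOn_snd_rpow _))
      (fun x => hη.eq_zero) hη1 hC hkC
  have hsupp : ∫ x in tsupport η, V x ^ t ≤ ∫ x in ball c r, V x ^ t :=
    setIntegral_mono_set (hVint (h.continuousOn_snd_rpow t))
      (ae_restrict_of_forall_mem measurableSet_ball fun x hx => rpow_nonneg (hV0 x hx) t)
      hη.tsupport_subset.eventuallyLE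
  linarith [hc.integral_norm_gradient_rpow_mul_sq_le h hW hΩ hσ0 hσ1 ht
      (hη.mono (ball_subset_closedBall.trans hB)) hM hηM hk hUV,
    mul_le_mul_of_nonneg_left hlower hc.error_nonneg,
    mul_le_mul_of_nonneg_left hsupp (mul_nonneg hM (add_nonneg hc.fst_nonneg hc.snd_pos.le))]

end

lemma IsCutoff.exists_norm_gradient_sq_add_abs_lap_sq_le {N : ℕ}
    {Ω : Set (EuclideanSpace ℝ (Fin N))} {η : EuclideanSpace ℝ (Fin N) → ℝ}
    (hη : IsCutoff 2 Ω η) :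
    ∃ M, 0 ≤ M ∧ ∀ x, ‖gradient η x‖ ^ 2 + |lap (fun z => η z ^ 2) x| ≤ M := by
  have hgrad := (hη.of_le one_le_two).norm_gradient_sq
  have hlap := hη.sq.laplacian
  obtain ⟨M₁, hM₁⟩ := hgrad.hasCompactSupport.exists_bound_of_continuous hgrad.contDiff.continuous
  obtain ⟨M₂, hM₂⟩ := hlap.hasCompactSupport.exists_bound_of_continuous hlap.contDiff.continuous
  exact ⟨M₁ + M₂, add_nonneg ((norm_nonneg _).trans (hM₁ 0)) ((norm_nonneg _).trans (hM₂ 0)),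
    fun x => add_le_add ((le_abs_self _).trans (hM₁ x)) (hM₂ x)⟩

lemma exists_rpow_setIntegral_rpow_le {N : ℕ} (hN : 3 ≤ N) {p θ σ t κ : ℝ} (hp : 1 < p)
    (hθ : 1 < θ) (hσ0 : 0 < σ) (hσ1 : σ ≤ 1) (hσ : σ * (θ + 1) = p + 1) (ht : 2 ≤ t)
    (hL : Lpoly p θ t < 0) (hκ : κ = N / ((N : ℝ) - 2)) :
    ∃ C, 0 ≤ C ∧ ∀ Ω, IsOpen Ω → closedBall 0 1 ⊆ Ω → ∀ U V : EuclideanSpace ℝ (Fin N) → ℝ,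
      IsNormalizedSolution Ω σ p θ U V →
      IsStablePotential Ω
        (fun x => √(σ * p * θ) * (V x ^ ((p - 1) / 2) * U x ^ ((θ - 1) / 2))) →
      (∫ x in ball 0 (1 / 4), V x ^ (κ * t)) ^ κ⁻¹ ≤ C * ∫ x in ball 0 1, V x ^ t := by
  obtain ⟨η, hη_smooth, hη0, hη1, hη_one⟩ := exists_isCutoff_eq_one
    (0 : EuclideanSpace ℝ (Fin N)) (a := 1 / 4) (b := 1 / 2) (by norm_num) (by norm_num)
  have hη : IsCutoff 2 (ball 0 (1 / 2)) η := hη_smooth.of_le ENat.LEInfty.out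
  obtain ⟨M, hM0, hM⟩ := hη.exists_norm_gradient_sq_add_abs_lap_sq_le
  obtain ⟨C, hC0, hC⟩ := exists_const_forall_exists_le_rpow_add N hσ0.le hσ1 hθ.le hσ
  obtain ⟨α, β, ρ, K, hc⟩ := exists_isCoupledInterpolation hp hθ hσ0 hσ1 hσ ht hL
  have hρβ : 0 < (1 - ρ) * β := mul_pos (sub_pos.2 hc.ratio_lt_one) hc.snd_pos
  have hαβ : 0 ≤ M * (α + β) := mul_nonneg hM0 (add_nonneg hc.fst_nonneg hc.snd_pos.le)
  let B : Set (EuclideanSpace ℝ (Fin N)) := ball 0 1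
  let S : ℝ := eLpNormLESNormFDerivOfEqInnerConst (volume : Measure (EuclideanSpace ℝ (Fin N))) 2
  have hKC : 0 ≤ K * (C * volume.real B) := mul_nonneg hc.error_nonneg (by positivity)
  refine ⟨S ^ 2 * (((1 - ρ) * β)⁻¹ * (K * (C * volume.real B) + M * (α + β))), by positivity,
    fun Ω hΩ hΩ1 U V h hW => ?_⟩
  obtain ⟨k, hk, hUV, hkC⟩ := hC Ω hΩ hΩ1 U V h
  have hηB : IsCutoff 2 B η := hη.mono (ball_subset_ball (by norm_num))
  have hηΩ : IsCutoff 2 Ω η := hηB.mono (ball_subset_closedBall.trans hΩ1)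
  have henergy := hc.integral_norm_gradient_rpow_mul_sq_le_mul_setIntegral h hW hΩ hσ0 hσ1 ht hΩ1
    hηB (fun x => pow_le_one₀ (hη0 x) (hη1 x)) hM0 hM hk
    (fun x hx => hUV x (hη.tsupport_subset hx)) hC0 hkC
  refine (rpow_setIntegral_rpow_le_mul_integral_norm_gradient_sq
    (by simpa using Nat.lt_of_succ_le hN) (by simpa using hκ) hΩ
    (h.contDiffOn_snd.of_le one_le_two) h.snd_pos (hηΩ.of_le one_le_two) measurableSet_ball
    (fun x hx => hη_one x (ball_subset_closedBall hx)) t).trans ?_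
  rw [mul_assoc, mul_assoc]
  exact mul_le_mul_of_nonneg_left ((le_inv_mul_iff₀ hρβ).2 henergy) (sq_nonneg _)

/-! ### Scaling -/

lemma exists_pos_mul_eq_mul_rpow {p θ σ μ ν : ℝ} (hpθ : p * θ ≠ 1) (hσ : 0 < σ) (hμ : 0 < μ)
    (hν : 0 < ν) : ∃ a b, 0 < a ∧ 0 < b ∧ a * μ = σ * b ^ p ∧ b * ν = a ^ θ := by
  let E := μ * ν ^ p / σ
  have hE : 0 < E := by positivity
  let a := E ^ (p * θ - 1)⁻¹
  have ha : 0 < a := by positivity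
  have haE : a ^ (θ * p) = E * a := by
    rw [← sub_add_cancel (θ * p) 1, rpow_add ha, rpow_one, mul_comm θ p,
      rpow_inv_rpow hE.le (sub_ne_zero.2 hpθ)]
  refine ⟨a, a ^ θ / ν, ha, by positivity, ?_, div_mul_cancel₀ _ hν.ne'⟩
  rw [div_rpow (by positivity) hν.le, ← rpow_mul ha.le, haE]
  have : 0 < ν ^ p := by positivity
  simp only [E]
  field_simp

lemma sqrt_mul_rpow_mul_rpow {p θ σ μ ν a b : ℝ} (hσ : 0 ≤ σ * p * θ) (ha : 0 < a) (hb : 0 < b)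
    (hab : a * μ = σ * b ^ p) (hba : b * ν = a ^ θ) :
    √(σ * p * θ) * (b ^ ((p - 1) / 2) * a ^ ((θ - 1) / 2)) = √(μ * ν * p * θ) := by
  have hsq {c : ℝ} (hc : 0 < c) (r : ℝ) : (c ^ ((r - 1) / 2)) ^ 2 * c = c ^ r := by
    rw [← rpow_mul_natCast hc.le, ← rpow_add_one hc.ne']
    congr 1
    push_cast
    ring
  have hμν : μ * ν = σ * (b ^ ((p - 1) / 2) * a ^ ((θ - 1) / 2)) ^ 2 := by
    apply mul_left_cancel₀ (mul_pos ha hb).ne'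
    rw [← hsq hb] at hab
    rw [← hsq ha] at hba
    linear_combination (b * ν) * hab + σ * ((b ^ ((p - 1) / 2)) ^ 2 * b) * hba
  rw [hμν, show ∀ c d : ℝ, c * d ^ 2 * p * θ = c * p * θ * d ^ 2 by intros; ring, sqrt_mul hσ,
    sqrt_sq (by positivity)]

section

variable {N : ℕ} {Ω : Set (EuclideanSpace ℝ (Fin N))} {lam gam p θ σ a b r : ℝ}
  {u v : EuclideanSpace ℝ (Fin N) → ℝ}

lemma contDiffOn_const_mul_comp_add_smul_add_one {w : EuclideanSpace ℝ (Fin N) → ℝ}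
    (hw : ContDiffOn ℝ 2 w Ω) (c : ℝ) (y : EuclideanSpace ℝ (Fin N)) (r : ℝ) :
    ContDiffOn ℝ 2 (fun z => c * (w (y + r • z) + 1)) ((fun z => y + r • z) ⁻¹' Ω) :=
  contDiffOn_const.mul <| (hw.comp (by fun_prop) (mapsTo_preimage _ _)).add contDiffOn_const

lemma lap_const_mul_comp_add_smul_add_one (w : EuclideanSpace ℝ (Fin N) → ℝ) (c : ℝ)
    (y : EuclideanSpace ℝ (Fin N)) (r : ℝ) (z : EuclideanSpace ℝ (Fin N)) :
    lap (fun z => c * (w (y + r • z) + 1)) z = c * (r ^ 2 * lap w (y + r • z)) := by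
  rw [lap_const_mul, lap_add_const, lap_comp_add_smul]

lemma IsSolution.isNormalizedSolution (h : IsSolution Ω lam gam p θ u v)
    (y : EuclideanSpace ℝ (Fin N)) (ha : 0 < a) (hb : 0 < b)
    (hab : a * (r ^ 2 * lam) = σ * b ^ p) (hba : b * (r ^ 2 * gam) = a ^ θ) :
    IsNormalizedSolution ((fun z => y + r • z) ⁻¹' Ω) σ p θ
      (fun z => a * (u (y + r • z) + 1)) (fun z => b * (v (y + r • z) + 1)) := by
  obtain ⟨hu, hv, hu0, hv0, hlapu, hlapv⟩ := h
  refine ⟨contDiffOn_const_mul_comp_add_smul_add_one hu a y r,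
    contDiffOn_const_mul_comp_add_smul_add_one hv b y r,
    fun z hz => mul_pos ha (add_pos (hu0 _ hz) one_pos),
    fun z hz => mul_pos hb (add_pos (hv0 _ hz) one_pos), fun z hz => ?_, fun z hz => ?_⟩
  · rw [lap_const_mul_comp_add_smul_add_one, mul_rpow hb.le (add_pos (hv0 _ hz) one_pos).le]
    linear_combination a * r ^ 2 * hlapu _ hz + (v (y + r • z) + 1) ^ p * hab
  · rw [lap_const_mul_comp_add_smul_add_one, mul_rpow ha.le (add_pos (hu0 _ hz) one_pos).le]
    linear_combination b * r ^ 2 * hlapv _ hz + (u (y + r • z) + 1) ^ θ * hba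

lemma IsStable.isStablePotential_rescaled (h : IsStable Ω lam gam p θ u v) (hΩ : IsOpen Ω)
    (hu : ∀ x ∈ Ω, 0 < u x) (hv : ∀ x ∈ Ω, 0 < v x) (y : EuclideanSpace ℝ (Fin N)) (hr : 0 < r)
    (hσ : 0 ≤ σ * p * θ) (ha : 0 < a) (hb : 0 < b)
    (hab : a * (r ^ 2 * lam) = σ * b ^ p) (hba : b * (r ^ 2 * gam) = a ^ θ) :
    IsStablePotential ((fun z => y + r • z) ⁻¹' Ω) (fun z => √(σ * p * θ) *
      ((b * (v (y + r • z) + 1)) ^ ((p - 1) / 2) * (a * (u (y + r • z) + 1)) ^ ((θ - 1) / 2))) := by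
  refine (h.isStablePotential.comp_add_smul hΩ y hr).congr
    (hΩ.preimage (by fun_prop)).measurableSet fun z hz => ?_
  have hscale : √(σ * p * θ) * (b ^ ((p - 1) / 2) * a ^ ((θ - 1) / 2)) =
      r ^ 2 * √(lam * gam * p * θ) := by
    rw [sqrt_mul_rpow_mul_rpow hσ ha hb hab hba,
      show r ^ 2 * lam * (r ^ 2 * gam) * p * θ = (r ^ 2) ^ 2 * (lam * gam * p * θ) by ring,
      sqrt_mul (sq_nonneg _), sqrt_sq (sq_nonneg r)]
  beta_reduce
  rw [mul_rpow hb.le (add_pos (hv _ hz) one_pos).le, mul_rpow ha.le (add_pos (hu _ hz) one_pos).le]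
  linear_combination -((v (y + r • z) + 1) ^ ((p - 1) / 2) * (u (y + r • z) + 1) ^ ((θ - 1) / 2)) *
    hscale

end

/-! ### Moments on balls and the iteration -/

section

variable {N : ℕ} {w : EuclideanSpace ℝ (Fin N) → ℝ} {y : EuclideanSpace ℝ (Fin N)}
  {p θ b r s t : ℝ}

/-- The scale-invariant moment `r^(-N) ∫_{B_r(y)} w^t`, written over the unit ball so that it is
the plain moment of the rescaled function. -/
def ballMoment (w : EuclideanSpace ℝ (Fin N) → ℝ) (y : EuclideanSpace ℝ (Fin N)) (r t : ℝ) : ℝ :=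
  ∫ z in ball 0 1, w (y + r • z) ^ t

lemma ballMoment_eq (w : EuclideanSpace ℝ (Fin N) → ℝ) (y : EuclideanSpace ℝ (Fin N))
    (hr : 0 < r) (t : ℝ) : ballMoment w y r t = r ^ (-(N : ℝ)) * ∫ x in ball y r, w x ^ t := by
  rw [ballMoment, setIntegral_ball_comp_add_smul (fun x => w x ^ t) y hr, mul_one,
    finrank_euclideanSpace_fin, rpow_neg hr.le, rpow_natCast]

lemma mapsTo_add_smul_ball (y : EuclideanSpace ℝ (Fin N)) (hr : 0 < r) :
    MapsTo (fun z => y + r • z) (closedBall 0 1) (closedBall y r) := fun z hz => by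
  rw [mem_closedBall_zero_iff] at hz
  rw [mem_closedBall, dist_self_add_left, norm_smul, Real.norm_eq_abs, abs_of_pos hr]
  exact mul_le_of_le_one_right hr.le hz

lemma ballMoment_nonneg (hr : 0 < r) (hw : ∀ x ∈ closedBall y r, 0 ≤ w x) (t : ℝ) :
    0 ≤ ballMoment w y r t :=
  setIntegral_nonneg measurableSet_ball fun _ hz =>
    rpow_nonneg (hw _ (mapsTo_add_smul_ball y hr (ball_subset_closedBall hz))) t

lemma ballMoment_rpow_two_div_le (hr : 0 < r) (hwc : ContinuousOn w (closedBall y r))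
    (hw : ∀ x ∈ closedBall y r, 0 < w x) (hs : 0 < s) (hst : s ≤ t) :
    ballMoment w y r s ^ (2 / s) ≤
      (volume.real (ball (0 : EuclideanSpace ℝ (Fin N)) 1) ^ (t / s - 1)) ^ (2 / t) *
        ballMoment w y r t ^ (2 / t) := by
  have ht : 0 < t := hs.trans_le hst
  have hpos (z : EuclideanSpace ℝ (Fin N)) (hz : z ∈ closedBall 0 1) : 0 < w (y + r • z) :=
    hw _ (mapsTo_add_smul_ball y hr hz)
  have hint (q : ℝ) : IntegrableOn (fun z => w (y + r • z) ^ q) (ball 0 1) :=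
    (((hwc.comp (by fun_prop) (mapsTo_add_smul_ball y hr)).rpow_const
      fun z hz => .inl (hpos z hz).ne').integrableOn_compact
        (isCompact_closedBall _ _)).mono_set ball_subset_closedBall
  have hpow : EqOn (fun z => (w (y + r • z) ^ s) ^ (t / s)) (fun z => w (y + r • z) ^ t)
      (ball 0 1) := fun z hz => by
    simp only [← rpow_mul (hpos z (ball_subset_closedBall hz)).le, mul_div_cancel₀ _ hs.ne']
  have := isFiniteMeasure_restrict.2
    (measure_ball_lt_top (μ := volume) (x := (0 : EuclideanSpace ℝ (Fin N))) (r := 1)).ne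
  have hJensen : ballMoment w y r s ^ (t / s) ≤
      volume.real (ball (0 : EuclideanSpace ℝ (Fin N)) 1) ^ (t / s - 1) * ballMoment w y r t := by
    have h := rpow_integral_le_mul_integral_rpow ((one_le_div hs).2 hst)
      (ae_restrict_of_forall_mem measurableSet_ball fun z hz =>
        rpow_nonneg (hpos z (ball_subset_closedBall hz)).le s) (hint s)
      ((hint t).congr_fun hpow.symm measurableSet_ball)
    rwa [measureReal_restrict_apply_univ, setIntegral_congr_fun measurableSet_ball hpow] at h
  have h0 (q : ℝ) : 0 ≤ ballMoment w y r q := ballMoment_nonneg hr (fun x hx => (hw x hx).le) q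
  calc ballMoment w y r s ^ (2 / s) = (ballMoment w y r s ^ (t / s)) ^ (2 / t) := by
        rw [← rpow_mul (h0 s), mul_comm (t / s), div_mul_div_cancel₀ ht.ne']
    _ ≤ _ := rpow_le_rpow (rpow_nonneg (h0 s) _) hJensen (by positivity)
    _ = _ := mul_rpow (by positivity) (h0 t)

/-- `w = v + 1` for the second component `v` of a stable solution in a neighbourhood of the closed
ball `B_r(y)`. The parameters `λ, γ > 0` of the system are left free, since the constants of the
local estimates depend neither on them nor on the neighbourhood. -/
def IsStableProfile (p θ : ℝ) (y : EuclideanSpace ℝ (Fin N)) (r : ℝ)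
    (w : EuclideanSpace ℝ (Fin N) → ℝ) : Prop :=
  ∃ Ω lam gam u v, IsOpen Ω ∧ closedBall y r ⊆ Ω ∧ 0 < lam ∧ 0 < gam ∧
    IsSolution Ω lam gam p θ u v ∧ IsStable Ω lam gam p θ u v ∧ w = fun x => v x + 1

namespace IsStableProfile

lemma mono {r' : ℝ} (h : IsStableProfile p θ y r w) (hr : r' ≤ r) :
    IsStableProfile p θ y r' w := by
  obtain ⟨Ω, lam, gam, u, v, hΩ, hball, h⟩ := h
  exact ⟨Ω, lam, gam, u, v, hΩ, (closedBall_subset_closedBall hr).trans hball, h⟩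

lemma continuousOn (h : IsStableProfile p θ y r w) : ContinuousOn w (closedBall y r) := by
  obtain ⟨Ω, lam, gam, u, v, -, hball, -, -, hsol, -, rfl⟩ := h
  exact (hsol.2.1.continuousOn.mono hball).add continuousOn_const

lemma pos (h : IsStableProfile p θ y r w) : ∀ x ∈ closedBall y r, 0 < w x := by
  obtain ⟨Ω, lam, gam, u, v, -, hball, -, -, hsol, -, rfl⟩ := h
  exact fun x hx => add_pos (hsol.2.2.2.1 x (hball hx)) one_pos

lemma exists_isNormalizedSolution {σ : ℝ} (h : IsStableProfile p θ y r w) (hr : 0 < r)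
    (hp : 1 < p) (hθ : 1 < θ) (hσ : 0 < σ) :
    ∃ b Ω U, 0 < b ∧ IsOpen Ω ∧ closedBall 0 1 ⊆ Ω ∧
      IsNormalizedSolution Ω σ p θ U (fun z => b * w (y + r • z)) ∧
      IsStablePotential Ω (fun z => √(σ * p * θ) *
        ((b * w (y + r • z)) ^ ((p - 1) / 2) * U z ^ ((θ - 1) / 2))) := by
  obtain ⟨Ω, lam, gam, u, v, hΩ, hball, hlam, hgam, hsol, hstab, rfl⟩ := h
  obtain ⟨a, b, ha, hb, hab, hba⟩ := exists_pos_mul_eq_mul_rpow (one_lt_mul hp.le hθ).ne' hσ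
    (mul_pos (pow_pos hr 2) hlam) (mul_pos (pow_pos hr 2) hgam)
  exact ⟨b, _, _, hb, hΩ.preimage (by fun_prop), (mapsTo_add_smul_ball y hr).mono_right hball,
    hsol.isNormalizedSolution y ha hb hab hba,
    hstab.isStablePotential_rescaled hΩ hsol.2.2.1 hsol.2.2.2.1 y hr (by positivity) ha hb hab hba⟩

end IsStableProfile

lemma exists_ballMoment_rpow_le (hN : 3 ≤ N) (hp : 1 < p) (hpθ : p ≤ θ) (ht : 2 ≤ t)
    (hL : Lpoly p θ t < 0) {κ : ℝ} (hκ : κ = N / ((N : ℝ) - 2)) :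
    ∃ C, 0 ≤ C ∧ ∀ (y : EuclideanSpace ℝ (Fin N)) (r : ℝ) (w : EuclideanSpace ℝ (Fin N) → ℝ),
      0 < r → IsStableProfile p θ y r w →
        ballMoment w y (r / 4) (κ * t) ^ κ⁻¹ ≤ C * ballMoment w y r t := by
  have hθ : 1 < θ := hp.trans_le hpθ
  have hσ0 : 0 < (p + 1) / (θ + 1) := by positivity
  have hκ0 : 0 < κ := by
    have : (3 : ℝ) ≤ N := by exact_mod_cast hN
    rw [hκ]
    exact div_pos (by linarith) (by linarith)
  obtain ⟨C, hC0, hC⟩ := exists_rpow_setIntegral_rpow_le hN hp hθ hσ0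
    ((div_le_one (by linarith)).2 (by linarith)) (div_mul_cancel₀ _ (by linarith)) ht hL hκ
  refine ⟨((4 : ℝ) ^ N) ^ κ⁻¹ * C, by positivity, fun y r w hr hw => ?_⟩
  obtain ⟨b, Ω, U, hb, hΩ, hball, hsol, hstab⟩ := hw.exists_isNormalizedSolution hr hp hθ hσ0
  have hw0 (z : EuclideanSpace ℝ (Fin N)) (hz : z ∈ closedBall 0 1) : 0 < w (y + r • z) :=
    hw.pos _ (mapsTo_add_smul_ball y hr hz)
  have hmul {ρ : ℝ} (hρ : ρ ≤ 1) (q : ℝ) : ∫ z in ball 0 ρ, (b * w (y + r • z)) ^ q =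
      b ^ q * ∫ z in ball 0 ρ, w (y + r • z) ^ q := by
    rw [← integral_const_mul]
    exact setIntegral_congr_fun measurableSet_ball fun z hz => mul_rpow hb.le
      (hw0 z (ball_subset_closedBall.trans (closedBall_subset_closedBall hρ) hz)).le
  have hquarter : ballMoment w y (r / 4) (κ * t) =
      4 ^ N * ∫ z in ball 0 (1 / 4), w (y + r • z) ^ (κ * t) := by
    have h := setIntegral_ball_comp_add_smul (μ := volume) (fun z => w (y + r • z) ^ (κ * t)) 0
      (one_div_pos.2 four_pos) 1
    simpa [ballMoment, smul_smul, ← div_eq_mul_inv] using h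
  have hint0 : 0 ≤ ∫ z in ball 0 (1 / 4), w (y + r • z) ^ (κ * t) :=
    setIntegral_nonneg measurableSet_ball fun z hz => rpow_nonneg (hw0 z
      (ball_subset_closedBall.trans (closedBall_subset_closedBall (by norm_num)) hz)).le _
  have hunit := hC Ω hΩ hball U _ hsol hstab
  rw [hmul (by norm_num), hmul le_rfl, mul_rpow (by positivity) hint0, ← rpow_mul hb.le,
    mul_right_comm, mul_inv_cancel₀ hκ0.ne', one_mul, mul_left_comm] at hunit
  rw [hquarter, mul_rpow (by positivity) hint0, mul_assoc]
  exact mul_le_mul_of_nonneg_left (le_of_mul_le_mul_left hunit (rpow_pos_of_pos hb t))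
    (by positivity)

/-- Moments of order `s` of stable profiles on a fixed fraction of a ball are controlled by the
second moment on the whole ball, uniformly over all balls and all profiles. -/
def HasLocalMomentEstimate (N : ℕ) (p θ s : ℝ) : Prop :=
  ∃ (ℓ : ℕ) (C : ℝ), 0 < C ∧
    ∀ (y : EuclideanSpace ℝ (Fin N)) (r : ℝ) (w : EuclideanSpace ℝ (Fin N) → ℝ),
      0 < r → IsStableProfile p θ y r w →
        ballMoment w y (r / 2 ^ ℓ) s ^ (2 / s) ≤ C * ballMoment w y r 2

namespace HasLocalMomentEstimate

lemma two (N : ℕ) (p θ : ℝ) : HasLocalMomentEstimate N p θ 2 :=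
  ⟨0, 1, one_pos, fun _ _ _ _ _ => by simp⟩

lemma of_le (h : HasLocalMomentEstimate N p θ t) (hs : 0 < s) (hst : s ≤ t) :
    HasLocalMomentEstimate N p θ s := by
  obtain ⟨ℓ, C, hC, hmoment⟩ := h
  have hvol : 0 < volume.real (ball (0 : EuclideanSpace ℝ (Fin N)) 1) :=
    ENNReal.toReal_pos (measure_ball_pos _ _ one_pos).ne' measure_ball_lt_top.ne
  refine ⟨ℓ, _, mul_pos (rpow_pos_of_pos (rpow_pos_of_pos hvol (t / s - 1)) (2 / t)) hC,
    fun y r w hr hw => ?_⟩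
  have hwℓ := hw.mono (div_le_self hr.le (one_le_pow₀ one_le_two : (1 : ℝ) ≤ 2 ^ ℓ))
  rw [mul_assoc]
  exact (ballMoment_rpow_two_div_le (by positivity) hwℓ.continuousOn hwℓ.pos hs hst).trans
    (mul_le_mul_of_nonneg_left (hmoment y r w hr hw) (by positivity))

lemma mul_left (h : HasLocalMomentEstimate N p θ t) (hN : 3 ≤ N) (hp : 1 < p) (hpθ : p ≤ θ)
    (ht : 2 ≤ t) (hL : Lpoly p θ t < 0) {κ : ℝ} (hκ : κ = N / ((N : ℝ) - 2)) :
    HasLocalMomentEstimate N p θ (κ * t) := by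
  obtain ⟨ℓ, C, hC, hmoment⟩ := h
  obtain ⟨D, hD, hgain⟩ := exists_ballMoment_rpow_le hN hp hpθ ht hL hκ
  refine ⟨ℓ + 2, (D + 1) ^ (2 / t) * C, by positivity, fun y r w hr hw => ?_⟩
  have hdiv (k : ℕ) : r / 2 ^ k ≤ r := div_le_self hr.le (one_le_pow₀ one_le_two)
  have hnonneg (k : ℕ) (q : ℝ) : 0 ≤ ballMoment w y (r / 2 ^ k) q :=
    ballMoment_nonneg (by positivity) (fun x hx => ((hw.mono (hdiv k)).pos x hx).le) q
  have hstep : ballMoment w y (r / 2 ^ (ℓ + 2)) (κ * t) ^ κ⁻¹ ≤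
      (D + 1) * ballMoment w y (r / 2 ^ ℓ) t := by
    have h := hgain y (r / 2 ^ ℓ) w (by positivity) (hw.mono (hdiv ℓ))
    rw [div_div, show (2 : ℝ) ^ ℓ * 4 = 2 ^ (ℓ + 2) by ring] at h
    exact h.trans (mul_le_mul_of_nonneg_right (by linarith) (hnonneg _ _))
  calc ballMoment w y (r / 2 ^ (ℓ + 2)) (κ * t) ^ (2 / (κ * t))
      = (ballMoment w y (r / 2 ^ (ℓ + 2)) (κ * t) ^ κ⁻¹) ^ (2 / t) := by
        rw [← rpow_mul (hnonneg _ _), inv_mul_eq_div, div_div, mul_comm t]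
    _ ≤ ((D + 1) * ballMoment w y (r / 2 ^ ℓ) t) ^ (2 / t) :=
        rpow_le_rpow (rpow_nonneg (hnonneg _ _) _) hstep (by positivity)
    _ = (D + 1) ^ (2 / t) * ballMoment w y (r / 2 ^ ℓ) t ^ (2 / t) :=
        mul_rpow (by positivity) (hnonneg _ _)
    _ ≤ (D + 1) ^ (2 / t) * (C * ballMoment w y r 2) :=
        mul_le_mul_of_nonneg_left (hmoment y r w hr hw) (by positivity)
    _ = (D + 1) ^ (2 / t) * C * ballMoment w y r 2 := (mul_assoc _ _ _).symm

lemma of_lt_mul (hN : 3 ≤ N) (hp : 1 < p) (hpθ : p ≤ θ) {s₀ : ℝ}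
    (hL : ∀ t ∈ Ioo 2 s₀, Lpoly p θ t < 0) {κ : ℝ} (hκ : κ = N / ((N : ℝ) - 2)) (hs : 0 < s)
    (hs' : s < κ * s₀) : HasLocalMomentEstimate N p θ s := by
  have hκ1 : 1 < κ := by
    have : (3 : ℝ) ≤ N := by exact_mod_cast hN
    rw [hκ, one_lt_div (by linarith)]
    linarith
  have hκ0 : 0 < κ := one_pos.trans hκ1
  obtain ⟨n, hn⟩ := pow_unbounded_of_one_lt (s / 2) hκ1
  replace hn : s ≤ κ ^ n * 2 := ((div_lt_iff₀ two_pos).1 hn).le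
  induction n generalizing s with
  | zero => exact (two N p θ).of_le hs (by simpa using hn)
  | succ n ih =>
    rcases le_or_gt s (κ * 2) with hle | hlt
    · exact ((two N p θ).mul_left hN hp hpθ le_rfl (Lpoly_two_neg hp hpθ) hκ).of_le hs hle
    · have htwo : 2 < s / κ := (lt_div_iff₀' hκ0).2 hlt
      have hlts₀ : s / κ < s₀ := (div_lt_iff₀' hκ0).2 hs'
      have hprev := ih (div_pos hs hκ0) ((div_lt_self hs hκ1).trans hs')
        ((div_le_iff₀' hκ0).2 (by rwa [← mul_assoc, ← pow_succ']))
      have hnext := hprev.mul_left hN hp hpθ htwo.le (hL _ ⟨htwo, hlts₀⟩) hκ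
      rwa [mul_div_cancel₀ _ hκ0.ne'] at hnext

end HasLocalMomentEstimate

end

theorem stmt18_general {N : ℕ} (hN : 3 ≤ N) {p θ s₀ s : ℝ} (hp : 1 < p) (hpθ : p ≤ θ)
    (hL : ∀ t ∈ Ioo 2 s₀, Lpoly p θ t < 0) (hs : 0 < s) (hs' : s < N / ((N : ℝ) - 2) * s₀) :
    ∃ (ℓ : ℕ) (C : ℝ), 0 < C ∧
      ∀ (Ω : Set (EuclideanSpace ℝ (Fin N))) (lam gam : ℝ) (u v : EuclideanSpace ℝ (Fin N) → ℝ),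
        IsOpen Ω → 0 < lam → 0 < gam →
        IsSolution Ω lam gam p θ u v → IsStable Ω lam gam p θ u v →
        ∀ (y : EuclideanSpace ℝ (Fin N)) (R : ℝ), 0 < R → closedBall y R ⊆ Ω →
          (R ^ (-(N : ℝ)) * ∫ x in ball y (R / 2 ^ ℓ), (v x + 1) ^ s) ^ (2 / s)
            ≤ C * R ^ (-(N : ℝ)) * ∫ x in ball y R, (v x + 1) ^ 2 := by
  obtain ⟨ℓ, C, hC, hmoment⟩ := HasLocalMomentEstimate.of_lt_mul hN hp hpθ hL rfl hs hs'
  refine ⟨ℓ, C, hC, fun Ω lam gam u v hΩ hlam hgam hsol hstab y R hR hball => ?_⟩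
  have hRℓ : R / 2 ^ ℓ ≤ R := div_le_self hR.le (one_le_pow₀ one_le_two)
  have hv0 : ∀ x ∈ ball y (R / 2 ^ ℓ), 0 ≤ (v x + 1) ^ s := fun x hx =>
    rpow_nonneg (add_pos (hsol.2.2.2.1 x
      (hball (ball_subset_closedBall (ball_subset_ball hRℓ hx)))) one_pos).le s
  have hint0 := setIntegral_nonneg (μ := volume) measurableSet_ball hv0
  have h := hmoment y R _ hR ⟨Ω, lam, gam, u, v, hΩ, hball, hlam, hgam, hsol, hstab, rfl⟩
  rw [ballMoment_eq _ _ (by positivity), ballMoment_eq _ _ hR, ← mul_assoc] at h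
  simp only [rpow_two] at h
  refine le_trans ?_ h
  gcongr ?_ ^ _
  exact mul_le_mul_of_nonneg_right
    (rpow_le_rpow_of_nonpos (by positivity) hRℓ (neg_nonpos.2 N.cast_nonneg)) hint0

/-- iterated local estimate for stable solutions. -/
theorem stmt18 {N : ℕ} (hN : 3 ≤ N) (Ω : Set (EuclideanSpace ℝ (Fin N))) (hΩ : IsOpen Ω)
    (p θ lam gam s₀ s : ℝ) (hp : 1 < p) (hpθ : p ≤ θ) (hlam : 0 < lam) (hgam : 0 < gam)
    (hs₀ : 2 < s₀) (hroot : Lpoly p θ s₀ = 0)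
    (huniq : ∀ s' : ℝ, 2 < s' → Lpoly p θ s' = 0 → s' = s₀)
    (hs : 2 ≤ s) (hs' : s < N / ((N : ℝ) - 2) * s₀) :
    ∃ (ℓ : ℕ) (C : ℝ), 0 < C ∧ ∀ u v : EuclideanSpace ℝ (Fin N) → ℝ,
      IsSolution Ω lam gam p θ u v → IsStable Ω lam gam p θ u v →
      ∀ (y : EuclideanSpace ℝ (Fin N)) (R : ℝ), 0 < R → closedBall y R ⊆ Ω →
        (R ^ (-(N : ℝ)) * ∫ x in ball y (R / 2 ^ ℓ), (v x + 1) ^ s) ^ (2 / s)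
          ≤ C * R ^ (-(N : ℝ)) * ∫ x in ball y R, (v x + 1) ^ 2 := by
  have hL : ∀ t ∈ Ioo 2 s₀, Lpoly p θ t < 0 := fun t ht =>
    Lpoly_neg_of_forall_eq hp hpθ huniq ht.1.le ht.2
  obtain ⟨ℓ, C, hC, h⟩ := stmt18_general hN hp hpθ hL (two_pos.trans_le hs) hs'
  exact ⟨ℓ, C, hC, fun u v => h Ω lam gam u v hΩ hlam hgam⟩
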